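/- (Existence of J-holomorphic discs in prescribed directions.) Let Ω be an open set in ℝ^{2n} with an almost complex structure J and let p ∈ Ω. Then there exists a neighborhood 𝒱 of 0 in ℝ^{2n} such that for every v ∈ 𝒱 there exists a smooth J-holomorphic disc f : Δ → Ω with f(0) = p and Df(0)(1) = v, where 1 denotes the unit vector ∂/∂x in ℂ ≅ ℝ². -/

import Mathlib

open Metric Set Filter Topology Asymptotics

noncomputable section

/-- The standard complex structure `J_st` (multiplication by `i`) on a complex
normed space, viewed as a real-linear endomorphism. -/
def Jst (E : Type*) [NormedAddCommGroup E] [NormedSpace ℂ E] : E →L[ℝ] E :=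
  ContinuousLinearMap.restrictScalars ℝ (Complex.I • ContinuousLinearMap.id ℂ E)

variable {E F : Type*} [NormedAddCommGroup E] [NormedSpace ℂ E]
  [NormedAddCommGroup F] [NormedSpace ℂ F]

/-- `J` is an almost complex structure on the set `Ω`: a smooth field of real-linear
endomorphisms with `J x ∘ J x = -id`. -/
structure IsACS (Ω : Set E) (J : E → E →L[ℝ] E) : Prop where
  smooth : ContDiffOn ℝ (⊤ : ℕ∞) J Ω
  sq : ∀ x ∈ Ω, (J x).comp (J x) = -(ContinuousLinearMap.id ℝ E)

/-- `f` is `(J', J)`-holomorphic on `s`: `Df(x) ∘ J'(x) = J(f x) ∘ Df(x)`. -/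
def IsHolomorphicMapOn (J' : E → E →L[ℝ] E) (J : F → F →L[ℝ] F) (f : E → F)
    (s : Set E) : Prop :=
  ∀ x ∈ s, DifferentiableAt ℝ f x ∧
    (fderiv ℝ f x).comp (J' x) = (J (f x)).comp (fderiv ℝ f x)

/-- The Levi form `L^J(r)(x)(X) = -d(J⋆dr)(x)(X, J x X)` where `J⋆dr` is the 1-form
`X ↦ dr(x)(J x X)` and `dω(x)(X,Y) = (Dω(x)X)(Y) - (Dω(x)Y)(X)`. -/
def leviForm (J : E → E →L[ℝ] E) (r : E → ℝ) (x : E) (X : E) : ℝ :=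
  -((fderiv ℝ (fun y => (fderiv ℝ r y).comp (J y)) x X) (J x X)
    - (fderiv ℝ (fun y => (fderiv ℝ r y).comp (J y)) x (J x X)) X)

/-- `r` is strictly `J`-plurisubharmonic on `s`. -/
def StrictPSHOn (J : E → E →L[ℝ] E) (r : E → ℝ) (s : Set E) : Prop :=
  ∀ x ∈ s, ∀ X : E, X ≠ 0 → 0 < leviForm J r x X

/-- `r` is `J`-plurisubharmonic on `s` (nonnegative Levi form). -/
def PSHOn (J : E → E →L[ℝ] E) (r : E → ℝ) (s : Set E) : Prop :=
  ∀ x ∈ s, ∀ X : E, 0 ≤ leviForm J r x X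

/-- `C⁰` norm of `g` on `K`. -/
def c0Norm {G : Type*} [NormedAddCommGroup G] (g : E → G) (K : Set E) : ℝ :=
  ⨆ x : K, ‖g (x : E)‖

/-- `C¹` norm of `g` on `K`. -/
def c1Norm {G : Type*} [NormedAddCommGroup G] [NormedSpace ℝ G] (g : E → G) (K : Set E) : ℝ :=
  ⨆ x : K, max ‖g (x : E)‖ ‖fderiv ℝ g (x : E)‖

/-- `C¹` distance between `g` and `h` on `K`. -/
def c1Dist {G : Type*} [NormedAddCommGroup G] [NormedSpace ℝ G] (g h : E → G) (K : Set E) : ℝ :=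
  ⨆ x : K, max ‖g (x : E) - h (x : E)‖ ‖fderiv ℝ g (x : E) - fderiv ℝ h (x : E)‖

/-- `C²` distance between `g` and `h` on `K`. -/
def c2Dist {G : Type*} [NormedAddCommGroup G] [NormedSpace ℝ G] (g h : E → G) (K : Set E) : ℝ :=
  ⨆ x : K, max ‖g (x : E) - h (x : E)‖
    (max ‖fderiv ℝ g (x : E) - fderiv ℝ h (x : E)‖
      ‖fderiv ℝ (fderiv ℝ g) (x : E) - fderiv ℝ (fderiv ℝ h) (x : E)‖)

/-- A `J`-holomorphic disc in `D`: a map from the unit disc `Δ ⊂ ℂ` to `D` satisfying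
`Df(ζ) ∘ J_st = J(f ζ) ∘ Df(ζ)`. -/
def IsJDisc (J : F → F →L[ℝ] F) (D : Set F) (f : ℂ → F) : Prop :=
  MapsTo f (ball (0 : ℂ) 1) D ∧
  ∀ ζ ∈ ball (0 : ℂ) 1, DifferentiableAt ℝ f ζ ∧
    (fderiv ℝ f ζ).comp (Jst ℂ) = (J (f ζ)).comp (fderiv ℝ f ζ)

/-- The Kobayashi–Royden infinitesimal pseudometric of `(D, J)`. -/
def kobayashiMetric (J : F → F →L[ℝ] F) (D : Set F) (p : F) (v : F) : ℝ :=
  sInf {α : ℝ | 0 < α ∧ ∃ f : ℂ → F, IsJDisc J D f ∧ f 0 = p ∧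
    fderiv ℝ f 0 1 = α⁻¹ • v}

/-- The integrated Kobayashi pseudodistance of `(D, J)`. -/
def kobayashiDist (J : F → F →L[ℝ] F) (D : Set F) (p q : F) : ℝ :=
  sInf {d : ℝ | ∃ γ : ℝ → F, ContDiffOn ℝ 1 γ (Icc 0 1) ∧ MapsTo γ (Icc 0 1) D ∧
    γ 0 = p ∧ γ 1 = q ∧ d = ∫ t in (0:ℝ)..1, kobayashiMetric J D (γ t) (deriv γ t)}

/-- `f` is a smooth diffeomorphism from `s` onto `t` with inverse `g`. -/
def IsDiffeoOn (f : E → F) (g : F → E) (s : Set E) (t : Set F) : Prop :=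
  ContDiffOn ℝ (⊤ : ℕ∞) f s ∧ ContDiffOn ℝ (⊤ : ℕ∞) g t ∧ MapsTo f s t ∧ MapsTo g t s ∧
  (∀ x ∈ s, g (f x) = x) ∧ (∀ y ∈ t, f (g y) = y)

/-- The Laplacian of a real function on `ℂ ≅ ℝ²`. -/
def lapR (g : ℂ → ℝ) (ζ : ℂ) : ℝ :=
  fderiv ℝ (fun w => fderiv ℝ g w 1) ζ 1
    + fderiv ℝ (fun w => fderiv ℝ g w Complex.I) ζ Complex.I

/-- The Wirtinger derivative `∂g/∂ζ`. -/
def wirtingerD (g : ℂ → ℂ) (ζ : ℂ) : ℂ :=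
  (fderiv ℝ g ζ 1 - Complex.I * fderiv ℝ g ζ Complex.I) / 2

/-- The Wirtinger derivative `∂g/∂ζ̄`. -/
def wirtingerDbar (g : ℂ → ℂ) (ζ : ℂ) : ℂ :=
  (fderiv ℝ g ζ 1 + Complex.I * fderiv ℝ g ζ Complex.I) / 2

/-- The coordinates of a point of `ℂ²`. -/
def coord2 (z : ℂ × ℂ) : Fin 2 → ℂ := ![z.1, z.2]

abbrev E2 := EuclideanSpace ℂ (Fin 2)

/-!
A linear change of coordinates turns `J(p)` into multiplication by `i` on a complex Hilbert space
`H`. In these coordinates the equation of a `J`-holomorphic disc `y` reads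
`∂₁y - i ∂₀y = Q(y) ∂₀y`, where `Q` is smooth and `Q(p) = 0`, and a cutoff makes `Q` globally
defined. We look for `y` on the torus `(ℝ/ℤ)²` as the sum of a function that is affine near the
origin, with slopes `v` and `c`, and of a periodic function `u` of mean zero. The unknown is the
sequence `w ∈ ℓ²(ℤ²; H)` of the Fourier coefficients of `(1 - Δ)(Q(y) ∂₀y)`; it determines `u`
through `(1 - Δ)(∂₁ - i ∂₀) u = w` off the frequency zero, and the choice `c = i v + w 0` absorbs
the mean. In dimension two `(1 - Δ)⁻¹` maps `L²` to continuous functions, so `u` and `∂ᵢu` are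
continuous, and the equation becomes a fixed point problem `w = F(t, (b, v), w)` with `F` smooth
and of zero derivative at the constant solution `p`. By the inverse function theorem every `1`-jet
near `(p, 0)` is the jet of a solution.

Regularity costs no elliptic estimate. The parameter `t ∈ ℝ²` of `F` translates the coordinate
functions of the torus, and `F` is equivariant under translations of the torus. Hence the translates
of a solution `w` solve the translated equations, and by local uniqueness and smooth dependence on
`t` the orbit of `w` under translations is smooth, which makes `y` smooth.
-/

section Superposition

variable {K : Type*} [TopologicalSpace K] {A B G : Type*} [NormedAddCommGroup A] [NormedSpace ℝ A]
  [NormedAddCommGroup B] [NormedSpace ℝ B] [NormedAddCommGroup G] [NormedSpace ℝ G]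

/-- The superposition (Nemytskii) operator `φ ↦ M ∘ φ` of a smooth map `M`. -/
def superpose {M : A → G} (hM : ContDiff ℝ (⊤ : ℕ∞) M) (φ : C(K, A)) : C(K, G) :=
  ⟨fun x => M (φ x), hM.continuous.comp φ.continuous⟩

@[simp] lemma superpose_apply {M : A → G} (hM : ContDiff ℝ (⊤ : ℕ∞) M) (φ : C(K, A)) (x : K) :
    superpose hM φ x = M (φ x) := rfl

lemma contDiff_fderiv {M : A → G} (hM : ContDiff ℝ (⊤ : ℕ∞) M) :
    ContDiff ℝ (⊤ : ℕ∞) (fderiv ℝ M) := hM.fderiv_right (m := (⊤ : ℕ∞)) (by simp)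

variable [CompactSpace K]

/-- Pointwise application of a continuous family of operators to a continuous family of vectors,
as a bounded bilinear map. -/
def contApply : C(K, A →L[ℝ] G) →L[ℝ] C(K, A) →L[ℝ] C(K, G) :=
  LinearMap.mkContinuous₂
    (LinearMap.mk₂ ℝ (fun (c : C(K, A →L[ℝ] G)) (a : C(K, A)) =>
        (⟨fun x => c x (a x), by fun_prop⟩ : C(K, G)))
      (fun _ _ _ => by ext; simp) (fun _ _ _ => by ext; simp)
      (fun _ _ _ => by ext; simp) (fun _ _ _ => by ext; simp)) 1
    (fun c a => by
      rw [one_mul]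
      refine (ContinuousMap.norm_le _ (by positivity)).2 fun x => ?_
      exact (c x).le_of_opNorm_le_of_le (c.norm_coe_le_norm x) (a.norm_coe_le_norm x))

@[simp] lemma contApply_apply (c : C(K, A →L[ℝ] G)) (a : C(K, A)) (x : K) :
    contApply c a x = c x (a x) := rfl

/-- The bounded bilinear map on continuous functions that applies `T` pointwise. -/
def contBilin (T : A →L[ℝ] B →L[ℝ] G) : C(K, A) →L[ℝ] C(K, B) →L[ℝ] C(K, G) :=
  contApply.comp (T.compLeftContinuous ℝ K)

@[simp] lemma contBilin_apply (T : A →L[ℝ] B →L[ℝ] G) (a : C(K, A)) (b : C(K, B)) (x : K) :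
    contBilin T a b x = T (a x) (b x) := rfl

lemma hasFDerivAt_superpose {M : A → G} (hM : ContDiff ℝ (⊤ : ℕ∞) M) (φ : C(K, A)) :
    HasFDerivAt (superpose hM) (contApply (superpose (contDiff_fderiv hM) φ)) φ := by
  rw [hasFDerivAt_iff_isLittleO_nhds_zero, isLittleO_iff]
  intro ε hε
  have huniform := (isCompact_range φ.continuous).uniformContinuousAt_of_continuousAt (fderiv ℝ M)
    (fun a _ => (contDiff_fderiv hM).continuous.continuousAt) (Metric.dist_mem_uniformity hε)
  obtain ⟨δ, hδ, hclose⟩ := Metric.mem_uniformity_dist.1 huniform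
  filter_upwards [Metric.ball_mem_nhds (0 : C(K, A)) hδ] with h hh
  refine (ContinuousMap.norm_le _ (by positivity)).2 fun x => ?_
  have hhx : ‖h x‖ < δ := (h.norm_coe_le_norm x).trans_lt (by simpa using hh)
  have hM'close : ∀ y ∈ ball (φ x) δ, ‖fderiv ℝ M y - fderiv ℝ M (φ x)‖ ≤ ε := fun y hy => by
    rw [← dist_eq_norm, dist_comm]
    exact le_of_lt (hclose (a := φ x) (b := y) (by rwa [dist_comm]) ⟨x, rfl⟩)
  have hmvt := (convex_ball (φ x) δ).norm_image_sub_le_of_norm_hasFDerivWithin_le'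
    (fun y _ => (hM.differentiable (by simp) y).hasFDerivAt.hasFDerivWithinAt) hM'close
    (mem_ball_self hδ) (show φ x + h x ∈ ball (φ x) δ by simpa using hhx)
  rw [add_sub_cancel_left] at hmvt
  exact hmvt.trans (by gcongr; exact h.norm_coe_le_norm x)

universe u

-- The codomains of the successive derivatives of `M` must lie in a single universe.
lemma contDiff_nat_superpose (n : ℕ) {A G : Type u} [NormedAddCommGroup A] [NormedSpace ℝ A]
    [NormedAddCommGroup G] [NormedSpace ℝ G] {M : A → G} (hM : ContDiff ℝ (⊤ : ℕ∞) M) :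
    ContDiff ℝ n (superpose (K := K) hM) := by
  induction n generalizing G with
  | zero =>
    exact contDiff_zero.2 <|
      continuous_iff_continuousAt.2 fun φ => (hasFDerivAt_superpose hM φ).continuousAt
  | succ n ih =>
    exact contDiff_succ_iff_hasFDerivAt.2 ⟨_,
      contApply.contDiff.comp (ih (contDiff_fderiv hM)), hasFDerivAt_superpose hM⟩

lemma contDiff_superpose {A G : Type u} [NormedAddCommGroup A] [NormedSpace ℝ A]
    [NormedAddCommGroup G] [NormedSpace ℝ G] {M : A → G} (hM : ContDiff ℝ (⊤ : ℕ∞) M) :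
    ContDiff ℝ (⊤ : ℕ∞) (superpose (K := K) hM) :=
  contDiff_infty.2 fun n => contDiff_nat_superpose n hM

lemma contDiff_bilinear {Θ : Type*} [NormedAddCommGroup Θ] [NormedSpace ℝ Θ]
    (T : A →L[ℝ] B →L[ℝ] G) {a : Θ → A} {b : Θ → B} (ha : ContDiff ℝ (⊤ : ℕ∞) a)
    (hb : ContDiff ℝ (⊤ : ℕ∞) b) : ContDiff ℝ (⊤ : ℕ∞) fun θ => T (a θ) (b θ) :=
  (T.contDiff.comp ha).clm_apply hb

end Superposition

section FourierCoefficients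

open MeasureTheory UnitAddTorus

attribute [local instance] instMeasureSpaceUnitAddCircle
  instIsAddHaarMeasureUnitAddCircleVolume instIsProbabilityMeasureUnitAddCircleVolume

variable {d : Type*}

/-- Translation of a function on the torus. -/
def transl {G : Type*} [TopologicalSpace G] (a : UnitAddTorus d) (q : C(UnitAddTorus d, G)) :
    C(UnitAddTorus d, G) :=
  q.comp ⟨fun x => x + a, by fun_prop⟩

@[simp] lemma transl_apply {G : Type*} [TopologicalSpace G] (a : UnitAddTorus d)
    (q : C(UnitAddTorus d, G)) (x : UnitAddTorus d) : transl a q x = q (x + a) := rfl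

@[simp] lemma transl_zero {G : Type*} [TopologicalSpace G] (q : C(UnitAddTorus d, G)) :
    transl 0 q = q := by
  ext; simp

variable [Fintype d]

lemma mFourier_apply_add (k : d → ℤ) (x y : UnitAddTorus d) :
    mFourier k (x + y) = mFourier k x * mFourier k y := by
  simp [mFourier, fourier_apply, smul_add, AddCircle.toCircle_add, Finset.prod_mul_distrib]

@[simp] lemma mFourier_apply_zero (k : d → ℤ) : mFourier k (0 : UnitAddTorus d) = 1 := by
  simp [mFourier]

lemma norm_mFourier_apply (k : d → ℤ) (x : UnitAddTorus d) : ‖mFourier k x‖ = 1 := by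
  simp only [mFourier, fourier_apply, ContinuousMap.coe_mk, norm_prod, Circle.norm_coe,
    Finset.prod_const_one]

lemma mFourier_neg_mul_self (k : d → ℤ) (x : UnitAddTorus d) :
    mFourier (-k) x * mFourier k x = 1 := by
  rw [← mFourier_add, neg_add_cancel, mFourier_zero, ContinuousMap.one_apply]

lemma integral_mFourier_neg_mul (k l : d → ℤ) :
    ∫ x : UnitAddTorus d, mFourier (-k) x * mFourier l x = if k = l then 1 else 0 := by
  have h := orthonormal_iff_ite.1 (orthonormal_mFourier (d := d)) k l
  rw [mFourierLp, ContinuousMap.inner_toLp] at h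
  simpa only [← mFourier_neg, mul_comm] using h

lemma integrable_of_continuous {G : Type*} [NormedAddCommGroup G]
    {q : UnitAddTorus d → G} (hq : Continuous q) : Integrable q :=
  hq.integrable_of_hasCompactSupport (HasCompactSupport.of_compactSpace q)

variable {H : Type*} [NormedAddCommGroup H] [NormedSpace ℂ H]

/-- The elementary wave `x ↦ e_k(x) • v` of frequency `k` and amplitude `v`. -/
def wave (k : d → ℤ) (v : H) : C(UnitAddTorus d, H) := ⟨fun x => mFourier k x • v, by fun_prop⟩

@[simp] lemma wave_apply (k : d → ℤ) (v : H) (x : UnitAddTorus d) :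
    wave k v x = mFourier k x • v := rfl

lemma norm_wave (k : d → ℤ) (v : H) : ‖wave k v‖ = ‖v‖ := by
  refine le_antisymm ((ContinuousMap.norm_le _ (norm_nonneg v)).2 fun x => ?_) ?_
  · rw [wave_apply, norm_smul, norm_mFourier_apply, one_mul]
  · simpa using (wave k v).norm_coe_le_norm 0

lemma norm_mFourierCoeff_le (q : C(UnitAddTorus d, H)) (k : d → ℤ) :
    ‖mFourierCoeff q k‖ ≤ ‖q‖ := by
  refine (norm_integral_le_of_norm_le_const (C := ‖q‖) (ae_of_all _ fun x => ?_)).trans (by simp)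
  rw [norm_smul, norm_mFourier_apply, one_mul]
  exact q.norm_coe_le_norm x

/-- The `k`-th Fourier coefficient as a bounded operator on continuous functions. -/
def fourierCoeffCLM (k : d → ℤ) : C(UnitAddTorus d, H) →L[ℝ] H :=
  LinearMap.mkContinuous
    { toFun := fun q => mFourierCoeff q k
      map_add' := fun q q' => by
        simp only [mFourierCoeff, ContinuousMap.add_apply, smul_add]
        exact integral_add (integrable_of_continuous (by fun_prop))
          (integrable_of_continuous (by fun_prop))
      map_smul' := fun c q => by
        simp only [mFourierCoeff, ContinuousMap.smul_apply, smul_comm _ c]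
        exact integral_smul c _ } 1
    (fun q => by simpa using norm_mFourierCoeff_le q k)

@[simp] lemma fourierCoeffCLM_apply (k : d → ℤ) (q : C(UnitAddTorus d, H)) :
    fourierCoeffCLM k q = mFourierCoeff q k := rfl

lemma mFourierCoeff_transl (a : UnitAddTorus d) (q : C(UnitAddTorus d, H)) (k : d → ℤ) :
    mFourierCoeff (transl a q) k = mFourier k a • mFourierCoeff q k := by
  have hshift : ∀ x, mFourier (-k) x • q (x + a)
      = mFourier k a • mFourier (-k) (x + a) • q (x + a) := fun x => by
    rw [mFourier_apply_add, smul_smul]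
    congr 1
    linear_combination -mFourier (-k) x * mFourier_neg_mul_self k a
  simp only [mFourierCoeff, transl_apply, hshift]
  rw [integral_smul, integral_add_right_eq_self (fun x => mFourier (-k) x • q x) a]

variable [CompleteSpace H]

lemma mFourierCoeff_wave (k l : d → ℤ) (v : H) :
    mFourierCoeff (wave l v) k = if k = l then v else 0 := by
  simp only [mFourierCoeff, wave_apply, smul_smul]
  rw [integral_smul_const, integral_mFourier_neg_mul]
  split_ifs <;> simp

end FourierCoefficients

section SquareIntegrable

open MeasureTheory UnitAddTorus
open scoped ENNReal

attribute [local instance] instMeasureSpaceUnitAddCircle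
  instIsAddHaarMeasureUnitAddCircleVolume instIsProbabilityMeasureUnitAddCircleVolume

variable {d : Type*} [Fintype d]

/-- Square-integrable functions on the torus, for the normalized Haar measure. -/
abbrev TorusL2 (d : Type*) [Fintype d] (G : Type*) [NormedAddCommGroup G] : Type _ :=
  Lp G 2 (volume : Measure (UnitAddTorus d))

/-- Square-summable families of Fourier coefficients. -/
abbrev CoeffSeq (d : Type*) (H : Type*) [NormedAddCommGroup H] : Type _ :=
  lp (fun _ : d → ℤ => H) 2

section Multiplication

variable {A G : Type*} [NormedAddCommGroup A] [NormedSpace ℝ A]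
  [NormedAddCommGroup G] [NormedSpace ℝ G]

/-- The class in `L²` of a continuous function on the torus. -/
def toL2 : C(UnitAddTorus d, G) →L[ℝ] TorusL2 d G := ContinuousMap.toLp 2 volume ℝ

lemma coeFn_toL2 (q : C(UnitAddTorus d, G)) : toL2 q =ᵐ[volume] q := ContinuousMap.coeFn_toLp _ _

/-- Multiplication of square-integrable functions by continuous operator fields. -/
def mulL2 : C(UnitAddTorus d, A →L[ℝ] G) →L[ℝ] TorusL2 d A →L[ℝ] TorusL2 d G :=
  ((ContinuousLinearMap.id ℝ (A →L[ℝ] G)).holderL volume ∞ 2 2).comp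
    (ContinuousMap.toLp ∞ volume ℝ)

lemma mulL2_toL2 (c : C(UnitAddTorus d, A →L[ℝ] G)) (a : C(UnitAddTorus d, A)) :
    mulL2 c (toL2 a) = toL2 (contApply c a) := by
  refine Lp.ext ?_
  filter_upwards [ContinuousLinearMap.coeFn_holder (r := 2) (ContinuousLinearMap.id ℝ (A →L[ℝ] G))
      (ContinuousMap.toLp ∞ volume ℝ c) (toL2 a), coeFn_toL2 a,
    coeFn_toL2 (contApply c a),
    ContinuousMap.coeFn_toLp (p := ∞) (𝕜 := ℝ) volume c] with x hmul ha hca hc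
  rw [hca]
  refine hmul.trans ?_
  rw [ha, hc]
  rfl

end Multiplication

variable {H : Type*} [NormedAddCommGroup H] [InnerProductSpace ℂ H]

lemma inner_toL2 (q q' : C(UnitAddTorus d, H)) :
    inner ℂ (toL2 q) (toL2 q') = ∫ x, inner ℂ (q x) (q' x) := by
  rw [L2.inner_def]
  refine integral_congr_ae ?_
  filter_upwards [coeFn_toL2 q, coeFn_toL2 q'] with x hq hq'
  rw [hq, hq']

variable [CompleteSpace H]

lemma inner_mFourierCoeff (v : H) (q : C(UnitAddTorus d, H)) (k : d → ℤ) :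
    inner ℂ v (mFourierCoeff q k) = ∫ x, mFourier (-k) x * inner ℂ v (q x) := by
  rw [mFourierCoeff, ← integral_inner (integrable_of_continuous (by fun_prop)) v]
  simp only [inner_smul_right]

lemma inner_toL2_wave (k : d → ℤ) (v : H) (q : C(UnitAddTorus d, H)) :
    inner ℂ (toL2 (wave k v)) (toL2 q) = inner ℂ v (mFourierCoeff q k) := by
  simp only [inner_toL2, inner_mFourierCoeff, wave_apply, inner_smul_left, mFourier_neg]

lemma eq_zero_of_mFourierCoeff_eq_zero {q : C(UnitAddTorus d, H)}
    (hq : ∀ k, mFourierCoeff q k = 0) : q = 0 := by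
  ext x
  let g : C(UnitAddTorus d, ℂ) := ⟨fun y => inner ℂ (q x) (q y), by fun_prop⟩
  have hg : mFourierCoeff g = 0 := funext fun k => by
    have hk := inner_mFourierCoeff (q x) q k
    rw [hq, inner_zero_right] at hk
    exact hk.symm
  have hsum := hasSum_mFourier_series_apply_of_summable (f := g) (by rw [hg]; exact summable_zero) x
  simp only [hg, Pi.zero_apply, zero_smul] at hsum
  exact inner_self_eq_zero.1 (hsum.unique hasSum_zero)

/-- The isometric embedding of `H` in `L²` by waves of frequency `k`. -/
def waveIso (H : Type*) [NormedAddCommGroup H] [InnerProductSpace ℂ H]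
    [CompleteSpace H] (k : d → ℤ) : H →ₗᵢ[ℂ] TorusL2 d H where
  toFun v := toL2 (wave k v)
  map_add' v w := by
    rw [← map_add]
    congr 1
    ext x
    simp
  map_smul' c v := by
    have hwave : wave k (c • v) = c • wave k v := by ext x; simp [smul_comm c]
    rw [hwave]
    exact (ContinuousMap.toLp 2 volume ℂ).map_smul c (wave k v)
  norm_map' v := by
    have h := inner_toL2_wave k v (wave k v)
    rw [mFourierCoeff_wave, if_pos rfl, inner_self_eq_norm_sq_to_K,
      inner_self_eq_norm_sq_to_K] at h
    exact (sq_eq_sq₀ (norm_nonneg _) (norm_nonneg _)).1 (by exact_mod_cast h)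

lemma orthogonalFamily_waveIso :
    OrthogonalFamily ℂ (fun _ : d → ℤ => H) (waveIso H) := fun k l hkl v w => by
  refine (inner_toL2_wave k v (wave l w)).trans ?_
  rw [mFourierCoeff_wave, if_neg hkl, inner_zero_right]

/-- Fourier synthesis: the square-integrable function with given Fourier coefficients. -/
def synth : CoeffSeq d H →L[ℂ] TorusL2 d H :=
  (orthogonalFamily_waveIso (H := H)).linearIsometry.toContinuousLinearMap

/-- Fourier analysis, the adjoint of synthesis. -/
def analysis : TorusL2 d H →L[ℂ] CoeffSeq d H := ContinuousLinearMap.adjoint synth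

lemma synth_single (k : d → ℤ) (v : H) : synth (lp.single 2 k v) = toL2 (wave k v) :=
  orthogonalFamily_waveIso.linearIsometry_apply_single v

lemma analysis_toL2 (q : C(UnitAddTorus d, H)) (k : d → ℤ) :
    (analysis (toL2 q) : CoeffSeq d H) k = mFourierCoeff q k := by
  refine ext_inner_left ℂ fun v => ?_
  rw [← inner_toL2_wave, ← synth_single, ← ContinuousLinearMap.adjoint_inner_right]
  exact (lp.inner_single_left (𝕜 := ℂ) (G := fun _ : d → ℤ => H) k v _).symm

end SquareIntegrable

section TorusDerivative

open UnitAddTorus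

variable {d : Type*} {A B G : Type*} [NormedAddCommGroup A] [NormedSpace ℝ A]
  [NormedAddCommGroup B] [NormedSpace ℝ B] [NormedAddCommGroup G] [NormedSpace ℝ G]

/-- The covering map of the torus by a Euclidean space. -/
def toTorus (t : d → ℝ) : UnitAddTorus d := fun i => (t i : UnitAddCircle)

lemma toTorus_add (s t : d → ℝ) : toTorus (s + t) = toTorus s + toTorus t := by
  ext i; simp [toTorus]

@[simp] lemma toTorus_zero : toTorus (0 : d → ℝ) = 0 := by
  ext; simp [toTorus]

omit [NormedSpace ℝ G] in
lemma transl_toTorus_add (s t : d → ℝ) (q : C(UnitAddTorus d, G)) :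
    transl (toTorus (s + t)) q = transl (toTorus s) (transl (toTorus t) q) := by
  ext x; simp [toTorus_add, add_assoc]

/-- Translation as a bounded operator on continuous functions. -/
def translCLM (a : UnitAddTorus d) : C(UnitAddTorus d, G) →L[ℝ] C(UnitAddTorus d, G) where
  toFun := transl a
  map_add' _ _ := rfl
  map_smul' _ _ := rfl
  cont := ContinuousMap.continuous_precomp _

@[simp] lemma translCLM_apply (a : UnitAddTorus d) (q : C(UnitAddTorus d, G)) :
    translCLM a q = transl a q := rfl

/-- `q'` is the partial derivative of `q` in the `i`-th direction, uniformly on the torus. -/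
def HasTorusDeriv [DecidableEq d] (i : d) (q q' : C(UnitAddTorus d, G)) : Prop :=
  HasDerivAt (fun t : ℝ => transl (toTorus (Pi.single i t)) q) q' 0

/-- The Fourier symbol of the `i`-th partial derivative. -/
def freq (i : d) (k : d → ℤ) : ℂ := 2 * Real.pi * Complex.I * k i

section Rules

variable [DecidableEq d] {i : d}

lemma hasTorusDeriv_const (i : d) (g : G) :
    HasTorusDeriv i (ContinuousMap.const (UnitAddTorus d) g) 0 :=
  hasDerivAt_const (0 : ℝ) (ContinuousMap.const (UnitAddTorus d) g)

namespace HasTorusDeriv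

protected lemma transl {q q' : C(UnitAddTorus d, G)} (h : HasTorusDeriv i q q')
    (a : UnitAddTorus d) : HasTorusDeriv i (transl a q) (transl a q') := by
  have hcomp := (translCLM (G := G) a).hasFDerivAt.comp_hasDerivAt (0 : ℝ) h
  refine hcomp.congr_of_eventuallyEq (Eventually.of_forall fun t => ?_)
  ext x
  simp [add_right_comm]

protected lemma add {p p' q q' : C(UnitAddTorus d, G)} (hp : HasTorusDeriv i p p')
    (hq : HasTorusDeriv i q q') : HasTorusDeriv i (p + q) (p' + q') := HasDerivAt.add hp hq

protected lemma sum {ι : Type*} {s : Finset ι} {q q' : ι → C(UnitAddTorus d, G)}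
    (h : ∀ j ∈ s, HasTorusDeriv i (q j) (q' j)) :
    HasTorusDeriv i (∑ j ∈ s, q j) (∑ j ∈ s, q' j) := by
  have horbit : (fun t : ℝ => transl (toTorus (Pi.single i t)) (∑ j ∈ s, q j))
      = fun t : ℝ => ∑ j ∈ s, transl (toTorus (Pi.single i t)) (q j) := by
    ext t x; simp
  rw [HasTorusDeriv, horbit]
  exact HasDerivAt.fun_sum h

protected lemma contBilin (T : A →L[ℝ] B →L[ℝ] G) {a a' : C(UnitAddTorus d, A)}
    {b b' : C(UnitAddTorus d, B)} (ha : HasTorusDeriv i a a') (hb : HasTorusDeriv i b b') :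
    HasTorusDeriv i (contBilin T a b) (contBilin T a' b + contBilin T a b') := by
  have h := ((contBilin T).hasFDerivAt_of_bilinear ha.hasFDerivAt hb.hasFDerivAt).hasDerivAt
  refine h.congr_deriv ?_
  ext x
  simp [add_comm]

protected lemma contApply {c c' : C(UnitAddTorus d, A →L[ℝ] G)} {a a' : C(UnitAddTorus d, A)}
    (hc : HasTorusDeriv i c c') (ha : HasTorusDeriv i a a') :
    HasTorusDeriv i (contApply c a) (contApply c' a + contApply c a') :=
  hc.contBilin (ContinuousLinearMap.id ℝ (A →L[ℝ] G)) ha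

protected lemma superpose {M : A → G} (hM : ContDiff ℝ (⊤ : ℕ∞) M) {q q' : C(UnitAddTorus d, A)}
    (h : HasTorusDeriv i q q') :
    HasTorusDeriv i (superpose hM q)
      (contApply (superpose (contDiff_fderiv hM) q) q') := by
  have hq : transl (toTorus (Pi.single i (0 : ℝ))) q = q := by simp
  have hM' := hasFDerivAt_superpose hM (transl (toTorus (Pi.single i (0 : ℝ))) q)
  have hcomp := hM'.comp_hasDerivAt (0 : ℝ) h
  rwa [hq] at hcomp

end HasTorusDeriv

end Rules

variable [Fintype d] [DecidableEq d] {i : d}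

omit [DecidableEq d] in
lemma mFourier_toTorus (k : d → ℤ) (t : d → ℝ) :
    mFourier k (toTorus t) = ∏ i, Complex.exp (freq i k * t i) := by
  refine Finset.prod_congr rfl fun i _ => ?_
  rw [toTorus, fourier_coe_apply, freq]
  simp

lemma mFourier_toTorus_single (i : d) (k : d → ℤ) (t : ℝ) :
    mFourier k (toTorus (Pi.single i t)) = Complex.exp (freq i k * t) := by
  rw [mFourier_toTorus, Finset.prod_eq_single i (fun j _ hj => by simp [hj]) (by simp),
    Pi.single_eq_same]

lemma hasDerivAt_mFourier_toTorus_single (i : d) (k : d → ℤ) :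
    HasDerivAt (fun t : ℝ => mFourier k (toTorus (Pi.single i t))) (freq i k) 0 := by
  simp only [mFourier_toTorus_single]
  have hlinear : HasDerivAt (fun t : ℝ => freq i k * (t : ℂ)) (freq i k) 0 := by
    simpa using (Complex.ofRealCLM.hasDerivAt (x := (0 : ℝ))).const_mul (freq i k)
  simpa using hlinear.cexp

lemma hasTorusDeriv_wave {H : Type*} [NormedAddCommGroup H] [NormedSpace ℂ H] (i : d) (k : d → ℤ)
    (v : H) : HasTorusDeriv i (wave k v) (wave k (freq i k • v)) := by
  have horbit : (fun t : ℝ => transl (toTorus (Pi.single i t)) (wave k v))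
      = fun t : ℝ => mFourier k (toTorus (Pi.single i t)) • wave k v := by
    ext t x; simp [mFourier_apply_add, smul_smul, mul_comm]
  have hderiv : wave k (freq i k • v) = freq i k • wave k v := by
    ext x; simp [smul_smul, mul_comm]
  rw [HasTorusDeriv, horbit, hderiv]
  exact (hasDerivAt_mFourier_toTorus_single i k).smul_const (wave k v)

namespace HasTorusDeriv

lemma mFourierCoeff_eq {H : Type*} [NormedAddCommGroup H] [NormedSpace ℂ H]
    {q q' : C(UnitAddTorus d, H)} (h : HasTorusDeriv i q q') (k : d → ℤ) :
    mFourierCoeff q' k = freq i k • mFourierCoeff q k := by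
  have hcoeff : HasDerivAt
      (fun t : ℝ => mFourierCoeff (transl (toTorus (Pi.single i t)) q) k) (mFourierCoeff q' k) 0 :=
    (fourierCoeffCLM (H := H) k).hasFDerivAt.comp_hasDerivAt 0 h
  simp only [mFourierCoeff_transl] at hcoeff
  exact hcoeff.unique ((hasDerivAt_mFourier_toTorus_single i k).smul_const _)

end HasTorusDeriv

/-- A function on the torus is smooth if its orbit under translations is smooth, as a map into the
space of continuous functions. -/
def IsTorusSmooth (q : C(UnitAddTorus d, G)) : Prop :=
  ContDiff ℝ (⊤ : ℕ∞) fun t : d → ℝ => transl (toTorus t) q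

/-- The `i`-th partial derivative of a smooth function on the torus. -/
def torusDeriv (i : d) (q : C(UnitAddTorus d, G)) : C(UnitAddTorus d, G) :=
  fderiv ℝ (fun t : d → ℝ => transl (toTorus t) q) 0 (Pi.single i 1)

omit [DecidableEq d] in
lemma isTorusSmooth_of_contDiffAt_zero {q : C(UnitAddTorus d, G)}
    (h : ContDiffAt ℝ (⊤ : ℕ∞) (fun t : d → ℝ => transl (toTorus t) q) 0) : IsTorusSmooth q := by
  refine contDiff_iff_contDiffAt.2 fun s => ?_
  have horbit : (fun t => transl (toTorus t) q)
      = fun t => translCLM (G := G) (toTorus s) (transl (toTorus (t - s)) q) := by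
    ext1 t
    rw [translCLM_apply, ← transl_toTorus_add, add_sub_cancel]
  rw [horbit]
  refine (translCLM (G := G) (toTorus s)).contDiff.contDiffAt.comp s ?_
  refine ContDiffAt.comp (g := fun t => transl (toTorus t) q) s ?_
    (contDiffAt_id.sub contDiffAt_const)
  rwa [sub_self]

namespace IsTorusSmooth

variable {q : C(UnitAddTorus d, G)}

lemma hasTorusDeriv (hq : IsTorusSmooth q) (i : d) : HasTorusDeriv i q (torusDeriv i q) := by
  have horbit := (hq.differentiable (by simp) (Pi.single i (0 : ℝ))).hasFDerivAt
  have hline := horbit.comp_hasDerivAt (0 : ℝ) (hasDerivAt_single i (0 : ℝ))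
  rwa [Pi.single_zero] at hline

protected lemma torusDeriv (hq : IsTorusSmooth q) (i : d) : IsTorusSmooth (torusDeriv i q) := by
  have hcommute : ∀ t : d → ℝ, transl (toTorus t) (torusDeriv i q)
      = fderiv ℝ (fun s : d → ℝ => transl (toTorus s) q) t (Pi.single i 1) := fun t => by
    have horbit := (hq.differentiable (by simp) (0 : d → ℝ)).hasFDerivAt
    have h := (translCLM (toTorus t)).hasFDerivAt.comp (0 : d → ℝ) horbit
    have heq : (fun s => transl (toTorus (t + s)) q)
        = translCLM (toTorus t) ∘ fun s => transl (toTorus s) q :=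
      funext fun s => transl_toTorus_add t s q
    rw [← heq] at h
    have h' := fderiv_comp_add_left (𝕜 := ℝ) (f := fun s : d → ℝ => transl (toTorus s) q)
      (x := (0 : d → ℝ)) t
    rw [h.fderiv, add_zero] at h'
    exact DFunLike.congr_fun h' (Pi.single i 1)
  simp only [IsTorusSmooth, hcommute]
  exact (contDiff_fderiv hq).clm_apply contDiff_const

omit [DecidableEq d] in
lemma contDiff_comp_toTorus (hq : IsTorusSmooth q) :
    ContDiff ℝ (⊤ : ℕ∞) fun t : d → ℝ => q (toTorus t) := by
  let eval : C(UnitAddTorus d, G) →L[ℝ] G := ContinuousMap.evalCLM ℝ (0 : UnitAddTorus d)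
  simpa [Function.comp_def, eval] using eval.contDiff.comp hq

lemma fderiv_comp_toTorus_single (hq : IsTorusSmooth q) (t : d → ℝ) (i : d) :
    fderiv ℝ (fun t : d → ℝ => q (toTorus t)) t (Pi.single i 1) = torusDeriv i q (toTorus t) := by
  have hline : HasDerivAt (fun s : ℝ => t + Pi.single i s) (Pi.single i (1 : ℝ)) 0 :=
    (hasDerivAt_single i (0 : ℝ)).const_add t
  have hchain : HasDerivAt (fun s : ℝ => q (toTorus (t + Pi.single i s)))
      (fderiv ℝ (fun t : d → ℝ => q (toTorus t)) t (Pi.single i 1)) 0 := by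
    refine HasFDerivAt.comp_hasDerivAt (l := fun t => q (toTorus t)) (0 : ℝ) ?_ hline
    simpa using (hq.contDiff_comp_toTorus.differentiable (by simp) t).hasFDerivAt
  let eval : C(UnitAddTorus d, G) →L[ℝ] G := ContinuousMap.evalCLM ℝ (toTorus t)
  have heval := eval.hasFDerivAt.comp_hasDerivAt (0 : ℝ) (hq.hasTorusDeriv i)
  refine hchain.unique (heval.congr_of_eventuallyEq (Eventually.of_forall fun s => ?_))
  simp [toTorus_add, eval]

end IsTorusSmooth

end TorusDerivative

section Leibniz

open UnitAddTorus

universe u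

variable {d : Type*} [Fintype d] {A B G : Type u} [NormedAddCommGroup A] [NormedSpace ℝ A]
  [NormedAddCommGroup B] [NormedSpace ℝ B] [NormedAddCommGroup G] [NormedSpace ℝ G]

/-- The expansion by the Leibniz rule of the second derivative, in a fixed direction, of the
function `M(φ) h`. Primes stand for derivatives; those of the highest order are only assumed to be
square-integrable. -/
def leibniz {M : A → B →L[ℝ] G} (hM : ContDiff ℝ (⊤ : ℕ∞) M) (φ φ' : C(UnitAddTorus d, A))
    (φ'' : TorusL2 d A) (h : C(UnitAddTorus d, B)) (h' h'' : TorusL2 d B) : TorusL2 d G :=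
  let Mφ := superpose hM φ
  let M'φ := superpose (contDiff_fderiv hM) φ
  let M''φ := superpose (contDiff_fderiv (contDiff_fderiv hM)) φ
  mulL2 Mφ h'' + (2 : ℝ) • mulL2 (contApply M'φ φ') h'
    + mulL2 (contApply (contApply M''φ φ') φ') (toL2 h)
    + mulL2 (contBilin (ContinuousLinearMap.flipₗᵢ ℝ A B G).toContinuousLinearEquiv M'φ h) φ''

set_option maxSynthPendingDepth 3 in
lemma contDiff_leibniz {M : A → B →L[ℝ] G} (hM : ContDiff ℝ (⊤ : ℕ∞) M)
    {Θ : Type*} [NormedAddCommGroup Θ] [NormedSpace ℝ Θ]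
    {φ φ' : Θ → C(UnitAddTorus d, A)} {φ'' : Θ → TorusL2 d A}
    {h : Θ → C(UnitAddTorus d, B)} {h' h'' : Θ → TorusL2 d B}
    (hφ : ContDiff ℝ (⊤ : ℕ∞) φ) (hφ' : ContDiff ℝ (⊤ : ℕ∞) φ') (hφ'' : ContDiff ℝ (⊤ : ℕ∞) φ'')
    (hh : ContDiff ℝ (⊤ : ℕ∞) h) (hh' : ContDiff ℝ (⊤ : ℕ∞) h') (hh'' : ContDiff ℝ (⊤ : ℕ∞) h'') :
    ContDiff ℝ (⊤ : ℕ∞) fun θ => leibniz hM (φ θ) (φ' θ) (φ'' θ) (h θ) (h' θ) (h'' θ) := by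
  have hMφ : ContDiff ℝ (⊤ : ℕ∞) fun θ => superpose hM (φ θ) :=
    (contDiff_superpose hM).comp hφ
  have hM'φ : ContDiff ℝ (⊤ : ℕ∞) fun θ => superpose (contDiff_fderiv hM) (φ θ) :=
    (contDiff_superpose (G := A →L[ℝ] B →L[ℝ] G) (contDiff_fderiv hM)).comp hφ
  have hM''φ : ContDiff ℝ (⊤ : ℕ∞) fun θ =>
      superpose (contDiff_fderiv (contDiff_fderiv hM)) (φ θ) :=
    (contDiff_superpose (G := A →L[ℝ] A →L[ℝ] B →L[ℝ] G)
      (contDiff_fderiv (contDiff_fderiv hM))).comp hφ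
  have hMφ' := contDiff_bilinear contApply hM'φ hφ'
  have hMφ'' := contDiff_bilinear contApply (contDiff_bilinear contApply hM''φ hφ') hφ'
  have hterm₁ := contDiff_bilinear mulL2 hMφ hh''
  have hterm₂ := (contDiff_bilinear mulL2 hMφ' hh').const_smul (2 : ℝ)
  have hterm₃ := contDiff_bilinear mulL2 hMφ'' (toL2.contDiff.comp hh)
  have hM'φh := contDiff_bilinear (contBilin (K := UnitAddTorus d)
    (ContinuousLinearMap.flipₗᵢ ℝ A B G).toContinuousLinearEquiv.toContinuousLinearMap) hM'φ hh
  have hterm₄ := contDiff_bilinear mulL2 hM'φh hφ''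
  exact ((hterm₁.add hterm₂).add hterm₃).add hterm₄

variable [DecidableEq d] {i : d}

lemma exists_leibniz_eq {M : A → B →L[ℝ] G} (hM : ContDiff ℝ (⊤ : ℕ∞) M)
    {φ φ' φ'' : C(UnitAddTorus d, A)} {h h' h'' : C(UnitAddTorus d, B)}
    (hφ : HasTorusDeriv i φ φ') (hφ' : HasTorusDeriv i φ' φ'')
    (hh : HasTorusDeriv i h h') (hh' : HasTorusDeriv i h' h'') :
    ∃ u' u'', HasTorusDeriv i (contApply (superpose hM φ) h) u' ∧ HasTorusDeriv i u' u'' ∧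
      leibniz hM φ φ' (toL2 φ'') h (toL2 h') (toL2 h'') = toL2 u'' := by
  have hMφ := hφ.superpose hM
  have hM'φ := (hφ.superpose (contDiff_fderiv hM)).contApply hφ'
  refine ⟨_, _, hMφ.contApply hh, (hM'φ.contApply hh).add (hMφ.contApply hh'), ?_⟩
  simp only [leibniz, mulL2_toL2, ← map_add, ← map_smul]
  congr 1
  ext x
  simp only [two_smul, map_add, ContinuousMap.add_apply, contApply_apply, superpose_apply,
    contBilin_apply, ContinuousLinearEquiv.coe_coe, LinearIsometryEquiv.coe_toContinuousLinearEquiv,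
    ContinuousLinearMap.coe_flipₗᵢ, ContinuousLinearMap.flip_apply, add_apply]
  abel

lemma analysis_leibniz {H : Type u} [NormedAddCommGroup H] [InnerProductSpace ℂ H]
    [CompleteSpace H] {M : A → B →L[ℝ] H} (hM : ContDiff ℝ (⊤ : ℕ∞) M)
    {φ φ' φ'' : C(UnitAddTorus d, A)} {h h' h'' : C(UnitAddTorus d, B)}
    (hφ : HasTorusDeriv i φ φ') (hφ' : HasTorusDeriv i φ' φ'')
    (hh : HasTorusDeriv i h h') (hh' : HasTorusDeriv i h' h'') (k : d → ℤ) :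
    (analysis (leibniz hM φ φ' (toL2 φ'') h (toL2 h') (toL2 h'')) : CoeffSeq d H) k
      = freq i k ^ 2 • mFourierCoeff (contApply (superpose hM φ) h) k := by
  obtain ⟨u', u'', hu', hu'', heq⟩ := exists_leibniz_eq hM hφ hφ' hh hh'
  rw [heq, analysis_toL2, hu''.mFourierCoeff_eq, hu'.mFourierCoeff_eq, smul_smul, sq]

end Leibniz

section Multipliers

open UnitAddTorus

variable {d H : Type*} [NormedAddCommGroup H] [NormedSpace ℂ H]

namespace CoeffSeq

omit [NormedSpace ℂ H]

lemma summable_norm_rpow (w : CoeffSeq d H) : Summable fun k => ‖w k‖ ^ (2 : ℝ) := by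
  simpa only [ENNReal.toReal_ofNat] using (lp.memℓp w).summable (by norm_num)

lemma summable_norm_mul_norm (m : CoeffSeq d ℂ) (w : CoeffSeq d H) :
    Summable fun k => ‖m k‖ * ‖w k‖ :=
  Real.summable_mul_of_Lp_Lq_of_nonneg Real.HolderConjugate.two_two (fun _ => norm_nonneg _)
    (fun _ => norm_nonneg _) m.summable_norm_rpow w.summable_norm_rpow

lemma tsum_norm_mul_norm_le (m : CoeffSeq d ℂ) (w : CoeffSeq d H) :
    ∑' k, ‖m k‖ * ‖w k‖ ≤ ‖m‖ * ‖w‖ := by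
  rw [lp.norm_eq_tsum_rpow (by norm_num) m, lp.norm_eq_tsum_rpow (by norm_num) w,
    ENNReal.toReal_ofNat]
  exact Real.inner_le_Lp_mul_Lq_tsum_of_nonneg Real.HolderConjugate.two_two
    (fun _ => norm_nonneg _) (fun _ => norm_nonneg _) m.summable_norm_rpow w.summable_norm_rpow

end CoeffSeq

/-- The diagonal operator on square-summable families with bounded symbol `m`. -/
def diag (m : (d → ℤ) → ℂ) (hm : ∀ k, ‖m k‖ ≤ 1) : CoeffSeq d H →L[ℝ] CoeffSeq d H :=
  have hle (w : CoeffSeq d H) (k) : ‖m k • w k‖ ≤ ‖w k‖ := by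
    rw [norm_smul]
    exact mul_le_of_le_one_left (norm_nonneg _) (hm k)
  LinearMap.mkContinuous
    { toFun := fun w => ⟨fun k => m k • w k, (lp.memℓp w).mono' (hle w)⟩
      map_add' := fun w w' => by ext k; exact smul_add _ _ _
      map_smul' := fun c w => by ext k; exact smul_comm _ _ _ } 1
    fun w => by
      rw [one_mul]
      exact lp.norm_mono (by norm_num) (hle w)

@[simp] lemma diag_apply (m : (d → ℤ) → ℂ) (hm : ∀ k, ‖m k‖ ≤ 1) (w : CoeffSeq d H)
    (k : d → ℤ) : diag m hm w k = m k • w k := rfl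

variable [Fintype d]

section SumWave

lemma norm_wave_smul (k : d → ℤ) (c : ℂ) (v : H) : ‖wave k (c • v)‖ = ‖c‖ * ‖v‖ := by
  rw [norm_wave, norm_smul]

variable [CompleteSpace H] (m : CoeffSeq d ℂ)

lemma summable_wave (w : CoeffSeq d H) : Summable fun k => wave k (m k • w k) :=
  Summable.of_norm_bounded (m.summable_norm_mul_norm w) fun k => (norm_wave_smul k _ _).le

/-- The continuous function with Fourier coefficients `m k • w k`, as an operator in `w`. -/
def sumWave : CoeffSeq d H →L[ℝ] C(UnitAddTorus d, H) :=
  LinearMap.mkContinuous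
    { toFun := fun w => ∑' k, wave k (m k • w k)
      map_add' := fun w w' => by
        rw [← (summable_wave m w).tsum_add (summable_wave m w')]
        congr! 2 with k
        ext x
        simp
      map_smul' := fun c w => by
        rw [RingHom.id_apply, ← (summable_wave m w).tsum_const_smul c]
        congr! 2 with k
        ext x
        simp [smul_comm _ c] } ‖m‖
    fun w => (tsum_of_norm_bounded (m.summable_norm_mul_norm w).hasSum
      fun k => (norm_wave_smul k _ _).le).trans (m.tsum_norm_mul_norm_le w)

lemma sumWave_eq_tsum (w : CoeffSeq d H) : sumWave m w = ∑' k, wave k (m k • w k) := rfl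

lemma mFourierCoeff_sumWave (w : CoeffSeq d H) (k : d → ℤ) :
    mFourierCoeff (sumWave m w) k = m k • w k := by
  rw [sumWave_eq_tsum, ← fourierCoeffCLM_apply, ContinuousLinearMap.map_tsum _ (summable_wave m w)]
  simp only [fourierCoeffCLM_apply, mFourierCoeff_wave, tsum_ite_eq']

end SumWave

/-- The trigonometric polynomial with frequencies in `s` and coefficients `m k • w k`. -/
def trigPoly (m : (d → ℤ) → ℂ) (s : Finset (d → ℤ)) (w : (d → ℤ) → H) : C(UnitAddTorus d, H) :=
  ∑ k ∈ s, wave k (m k • w k)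

lemma hasTorusDeriv_trigPoly [DecidableEq d] (i : d) (m : (d → ℤ) → ℂ) (s : Finset (d → ℤ))
    (w : (d → ℤ) → H) :
    HasTorusDeriv i (trigPoly m s w) (trigPoly (fun k => freq i k * m k) s w) := by
  refine HasTorusDeriv.sum fun k _ => ?_
  rw [mul_smul]
  exact hasTorusDeriv_wave i k _

/-- The truncation of a family of coefficients to a finite set of frequencies. -/
def truncSeq {H : Type*} [NormedAddCommGroup H] (s : Finset (d → ℤ)) (w : (d → ℤ) → H) :
    CoeffSeq d H := ∑ k ∈ s, lp.single 2 k (w k)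

omit [NormedSpace ℂ H] in
lemma tendsto_truncSeq (w : CoeffSeq d H) : Tendsto (fun s => truncSeq s w) atTop (𝓝 w) :=
  lp.hasSum_single (by norm_num) w

lemma sumWave_truncSeq [CompleteSpace H] (m : CoeffSeq d ℂ) (s : Finset (d → ℤ))
    (w : (d → ℤ) → H) : sumWave m (truncSeq s w) = trigPoly m s w := by
  rw [truncSeq, map_sum, trigPoly]
  refine Finset.sum_congr rfl fun k _ => ?_
  rw [sumWave_eq_tsum, tsum_eq_single k]
  · simp
  · intro l hl
    ext x
    simp [hl]

lemma diag_single (m : (d → ℤ) → ℂ) (hm : ∀ k, ‖m k‖ ≤ 1) (k : d → ℤ) (v : H) :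
    diag m hm (lp.single 2 k v) = lp.single 2 k (m k • v) := by
  ext l
  rw [diag_apply]
  rcases eq_or_ne l k with rfl | hl
  · simp
  · simp [hl]

lemma synth_diag_truncSeq {H : Type*} [NormedAddCommGroup H] [InnerProductSpace ℂ H]
    [CompleteSpace H] (m : (d → ℤ) → ℂ) (hm : ∀ k, ‖m k‖ ≤ 1) (s : Finset (d → ℤ))
    (w : (d → ℤ) → H) : synth (diag m hm (truncSeq s w)) = toL2 (trigPoly m s w) := by
  simp only [truncSeq, trigPoly, map_sum, diag_single, synth_single]

end Multipliers

section Symbols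

variable {d : Type*}

lemma norm_freq (i : d) (k : d → ℤ) : ‖freq i k‖ = 2 * Real.pi * |(k i : ℝ)| := by
  simp [freq, abs_of_pos Real.pi_pos]

lemma freq_zero (i : d) : freq i 0 = 0 := by simp [freq]

lemma freq_sq (i : d) (k : d → ℤ) : freq i k ^ 2 = -((‖freq i k‖ ^ 2 : ℝ) : ℂ) := by
  rw [norm_freq, mul_pow, sq_abs, freq]
  push_cast
  linear_combination (2 * Real.pi * (k i : ℂ)) ^ 2 * Complex.I_sq

lemma abs_le_norm_freq (i : d) (k : d → ℤ) : |(k i : ℝ)| ≤ ‖freq i k‖ := by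
  rw [norm_freq]
  exact le_mul_of_one_le_left (abs_nonneg _) (by linarith [Real.pi_gt_three])

variable [Fintype d]

/-- The Fourier symbol of `1 - Δ`. -/
def weight (k : d → ℤ) : ℂ := 1 - ∑ i, freq i k ^ 2

lemma norm_weight (k : d → ℤ) : ‖weight k‖ = 1 + ∑ i, ‖freq i k‖ ^ 2 := by
  have hreal : weight k = ((1 + ∑ i, ‖freq i k‖ ^ 2 : ℝ) : ℂ) := by
    simp only [weight, freq_sq, Finset.sum_neg_distrib, sub_neg_eq_add]
    push_cast
    rfl
  rw [hreal, Complex.norm_of_nonneg (by positivity)]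

lemma one_add_norm_freq_sq_le (i : d) (k : d → ℤ) : 1 + ‖freq i k‖ ^ 2 ≤ ‖weight k‖ := by
  rw [norm_weight]
  gcongr
  exact Finset.single_le_sum (f := fun j => ‖freq j k‖ ^ 2) (fun _ _ => by positivity)
    (Finset.mem_univ i)

lemma weight_ne_zero (k : d → ℤ) : weight k ≠ 0 := by
  rw [← norm_pos_iff, norm_weight]
  positivity

lemma norm_sq_le_norm_weight (k : d → ℤ) : ‖k‖ ^ 2 ≤ ‖weight k‖ := by
  rw [← Real.le_sqrt (norm_nonneg _) (norm_nonneg _)]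
  refine (pi_norm_le_iff_of_nonneg (Real.sqrt_nonneg _)).2 fun i => Real.le_sqrt_of_sq_le ?_
  rw [Int.norm_eq_abs]
  have hfreq := pow_le_pow_left₀ (abs_nonneg _) (abs_le_norm_freq i k) 2
  linarith [one_add_norm_freq_sq_le i k]

lemma norm_freq_mul_inv_weight_le (i : d) (k : d → ℤ) : ‖freq i k * (weight k)⁻¹‖ ≤ 1 := by
  rw [norm_mul, norm_inv, ← div_eq_mul_inv]
  refine div_le_one_of_le₀ ?_ (norm_nonneg _)
  nlinarith [one_add_norm_freq_sq_le i k, sq_nonneg (‖freq i k‖ - 1), norm_nonneg (freq i k)]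

lemma norm_freq_sq_mul_inv_weight_le (i : d) (k : d → ℤ) :
    ‖freq i k ^ 2 * (weight k)⁻¹‖ ≤ 1 := by
  rw [norm_mul, norm_inv, norm_pow, ← div_eq_mul_inv]
  exact div_le_one_of_le₀ (by linarith [one_add_norm_freq_sq_le i k]) (norm_nonneg _)

lemma summable_norm_inv_weight_rpow :
    Summable fun k : Fin 2 → ℤ => ‖(weight k)⁻¹‖ ^ (2 : ℝ) := by
  refine Summable.of_norm_bounded_eventually
    (EisensteinSeries.summable_one_div_norm_rpow (k := 4) (by norm_num)) ?_
  filter_upwards [(Set.finite_singleton (0 : Fin 2 → ℤ)).compl_mem_cofinite] with k hk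
  have hk' : 0 < ‖k‖ := norm_pos_iff.2 hk
  rw [Real.norm_of_nonneg (by positivity), Real.rpow_neg hk'.le, Real.rpow_two, norm_inv, inv_pow]
  refine inv_anti₀ (by positivity) ?_
  calc ‖k‖ ^ (4 : ℝ) = (‖k‖ ^ 2) ^ 2 := by rw [← pow_mul]; exact_mod_cast Real.rpow_natCast ‖k‖ 4
    _ ≤ ‖weight k‖ ^ 2 := by gcongr; exact norm_sq_le_norm_weight k

/-- The square-summable family `m k / weight k`, for a bounded symbol `m`. -/
def weightSeq (m : (Fin 2 → ℤ) → ℂ) (hm : ∀ k, ‖m k‖ ≤ 1) : CoeffSeq (Fin 2) ℂ :=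
  ⟨fun k => m k * (weight k)⁻¹, by
    refine Memℓp.mono' (g := fun k => (weight k)⁻¹) (memℓp_gen ?_) fun k => ?_
    · rw [ENNReal.toReal_ofNat]; exact summable_norm_inv_weight_rpow
    · rw [norm_mul]; exact mul_le_of_le_one_left (norm_nonneg _) (hm k)⟩

lemma weightSeq_apply (m : (Fin 2 → ℤ) → ℂ) (hm : ∀ k, ‖m k‖ ≤ 1) (k : Fin 2 → ℤ) :
    weightSeq m hm k = m k * (weight k)⁻¹ := rfl

/-- The Fourier symbol of the Cauchy-Riemann operator `∂₁ - i ∂₀`. -/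
def dbarSymbol (k : Fin 2 → ℤ) : ℂ := freq 1 k - Complex.I * freq 0 k

lemma norm_dbarSymbol_sq (k : Fin 2 → ℤ) :
    ‖dbarSymbol k‖ ^ 2 = ‖freq 0 k‖ ^ 2 + ‖freq 1 k‖ ^ 2 := by
  simp only [← Complex.normSq_eq_norm_sq, Complex.normSq_apply]
  simp [dbarSymbol, freq]

lemma norm_freq_le_norm_dbarSymbol (i : Fin 2) (k : Fin 2 → ℤ) :
    ‖freq i k‖ ≤ ‖dbarSymbol k‖ := by
  refine le_of_sq_le_sq ?_ (norm_nonneg _)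
  rw [norm_dbarSymbol_sq]
  fin_cases i <;> simp

lemma one_le_norm_dbarSymbol {k : Fin 2 → ℤ} (hk : k ≠ 0) :
    1 ≤ ‖dbarSymbol k‖ := by
  obtain ⟨i, hi⟩ := Function.ne_iff.1 hk
  have hki : (1 : ℝ) ≤ |(k i : ℝ)| := by exact_mod_cast Int.one_le_abs hi
  exact hki.trans ((abs_le_norm_freq i k).trans (norm_freq_le_norm_dbarSymbol i k))

lemma norm_inv_dbarSymbol_le (k : Fin 2 → ℤ) : ‖(dbarSymbol k)⁻¹‖ ≤ 1 := by
  rcases eq_or_ne k 0 with rfl | hk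
  · simp [dbarSymbol, freq_zero]
  · rw [norm_inv]
    exact inv_le_one_of_one_le₀ (one_le_norm_dbarSymbol hk)

lemma norm_freq_mul_inv_dbarSymbol_le (i : Fin 2) (k : Fin 2 → ℤ) :
    ‖freq i k * (dbarSymbol k)⁻¹‖ ≤ 1 := by
  rw [norm_mul, norm_inv, ← div_eq_mul_inv]
  exact div_le_one_of_le₀ (norm_freq_le_norm_dbarSymbol i k) (norm_nonneg _)

/-- The Fourier symbol of the solution operator of `(1 - Δ)(∂₁ - i ∂₀) y = w`, with the value
`0⁻¹ = 0` at frequency zero. -/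
def solSymbol (k : Fin 2 → ℤ) : ℂ := (dbarSymbol k)⁻¹ * (weight k)⁻¹

lemma norm_freq_mul_freq_mul_solSymbol_le (i j : Fin 2) (k : Fin 2 → ℤ) :
    ‖freq i k * (freq j k * solSymbol k)‖ ≤ 1 := by
  have hfactor : freq i k * (freq j k * solSymbol k)
      = freq j k * (dbarSymbol k)⁻¹ * (freq i k * (weight k)⁻¹) := by rw [solSymbol]; ring
  rw [hfactor, norm_mul]
  exact mul_le_one₀ (norm_freq_mul_inv_dbarSymbol_le j k) (norm_nonneg _)
    (norm_freq_mul_inv_weight_le i k)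

lemma norm_freq_mul_freq_mul_freq_mul_solSymbol_le (i j : Fin 2) (k : Fin 2 → ℤ) :
    ‖freq i k * (freq i k * (freq j k * solSymbol k))‖ ≤ 1 := by
  have hfactor : freq i k * (freq i k * (freq j k * solSymbol k))
      = freq j k * (dbarSymbol k)⁻¹ * (freq i k ^ 2 * (weight k)⁻¹) := by rw [solSymbol]; ring
  rw [hfactor, norm_mul]
  exact mul_le_one₀ (norm_freq_mul_inv_dbarSymbol_le j k) (norm_nonneg _)
    (norm_freq_sq_mul_inv_weight_le i k)

end Symbols

section Source

open UnitAddTorus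

universe u

variable {H : Type u} [NormedAddCommGroup H] [InnerProductSpace ℂ H] [CompleteSpace H]

/-- Constant functions on a compact space, as a bounded operator. -/
def constCLM {K R : Type*} [TopologicalSpace K] [CompactSpace K] [NormedAddCommGroup R]
    [NormedSpace ℝ R] : R →L[ℝ] C(K, R) :=
  LinearMap.mkContinuous
    { toFun := ContinuousMap.const K, map_add' := fun _ _ => rfl, map_smul' := fun _ _ => rfl } 1
    fun r => by
      rw [one_mul]
      exact (ContinuousMap.norm_le _ (norm_nonneg _)).2 fun _ => le_rfl

@[simp] lemma constCLM_apply {K R : Type*} [TopologicalSpace K] [CompactSpace K]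
    [NormedAddCommGroup R] [NormedSpace ℝ R] (r : R) (x : K) : constCLM r x = r := rfl

/-- The periodic solution `y` of `(1 - Δ)(∂₁ - i ∂₀) y = w` with mean zero. -/
def sol : CoeffSeq (Fin 2) H →L[ℝ] C(UnitAddTorus (Fin 2), H) :=
  sumWave (weightSeq (fun k => (dbarSymbol k)⁻¹) norm_inv_dbarSymbol_le)

/-- The `i`-th partial derivative of `sol`. -/
def solDeriv (i : Fin 2) : CoeffSeq (Fin 2) H →L[ℝ] C(UnitAddTorus (Fin 2), H) :=
  sumWave (weightSeq _ (norm_freq_mul_inv_dbarSymbol_le i))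

/-- The derivative `∂ᵢ ∂ⱼ` of `sol`. -/
def solDeriv₂ (i j : Fin 2) : CoeffSeq (Fin 2) H →L[ℝ] TorusL2 (Fin 2) H :=
  (synth.restrictScalars ℝ).comp (diag _ (norm_freq_mul_freq_mul_solSymbol_le i j))

/-- The derivative `∂ᵢ ∂ᵢ ∂ⱼ` of `sol`. -/
def solDeriv₃ (i j : Fin 2) : CoeffSeq (Fin 2) H →L[ℝ] TorusL2 (Fin 2) H :=
  (synth.restrictScalars ℝ).comp (diag _ (norm_freq_mul_freq_mul_freq_mul_solSymbol_le i j))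

lemma sol_truncSeq (s : Finset (Fin 2 → ℤ)) (w : (Fin 2 → ℤ) → H) :
    sol (truncSeq s w) = trigPoly solSymbol s w := sumWave_truncSeq _ s w

lemma solDeriv_truncSeq (i : Fin 2) (s : Finset (Fin 2 → ℤ)) (w : (Fin 2 → ℤ) → H) :
    solDeriv i (truncSeq s w) = trigPoly (fun k => freq i k * solSymbol k) s w := by
  simp only [solDeriv, sumWave_truncSeq, solSymbol, ← mul_assoc]
  rfl

lemma solDeriv₂_truncSeq (i j : Fin 2) (s : Finset (Fin 2 → ℤ)) (w : (Fin 2 → ℤ) → H) :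
    solDeriv₂ i j (truncSeq s w)
      = toL2 (trigPoly (fun k => freq i k * (freq j k * solSymbol k)) s w) :=
  synth_diag_truncSeq _ _ s w

lemma solDeriv₃_truncSeq (i j : Fin 2) (s : Finset (Fin 2 → ℤ)) (w : (Fin 2 → ℤ) → H) :
    solDeriv₃ i j (truncSeq s w)
      = toL2 (trigPoly (fun k => freq i k * (freq i k * (freq j k * solSymbol k))) s w) :=
  synth_diag_truncSeq _ _ s w

variable {Q : H → H →L[ℝ] H} (hQ : ContDiff ℝ (⊤ : ℕ∞) Q)

/-- The source term `Q(y) ∂₀y` for `y = P + sol w`, where `P` is a function with `∂₀P = v`. -/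
def source (P : C(UnitAddTorus (Fin 2), H)) (v : H) (w : CoeffSeq (Fin 2) H) :
    C(UnitAddTorus (Fin 2), H) :=
  contApply (superpose hQ (P + sol w)) (constCLM v + solDeriv 0 w)

/-- The Fourier coefficients of `(1 - Δ)` applied to `source`, computed by the Leibniz rule from
the first and second derivatives `P'` and `P''` of `P`. Unlike the plain expression
`weight k • mFourierCoeff (source hQ P v w) k`, it is visibly smooth in `w` for the `ℓ²` norm. -/
def weightedSource (P : C(UnitAddTorus (Fin 2), H)) (P' P'' : Fin 2 → C(UnitAddTorus (Fin 2), H))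
    (v : H) (w : CoeffSeq (Fin 2) H) : CoeffSeq (Fin 2) H :=
  analysis (toL2 (source hQ P v w) - ∑ i, leibniz hQ (P + sol w) (P' i + solDeriv i w)
    (toL2 (P'' i) + solDeriv₂ i i w) (constCLM v + solDeriv 0 w) (solDeriv₂ i 0 w)
    (solDeriv₃ i 0 w))

section Smoothness

variable {Θ : Type*} [NormedAddCommGroup Θ] [NormedSpace ℝ Θ]
  {P : Θ → C(UnitAddTorus (Fin 2), H)} {P' P'' : Θ → Fin 2 → C(UnitAddTorus (Fin 2), H)}
  {v : Θ → H} {w : Θ → CoeffSeq (Fin 2) H}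

lemma contDiff_source (hP : ContDiff ℝ (⊤ : ℕ∞) P) (hv : ContDiff ℝ (⊤ : ℕ∞) v)
    (hw : ContDiff ℝ (⊤ : ℕ∞) w) :
    ContDiff ℝ (⊤ : ℕ∞) fun θ => source hQ (P θ) (v θ) (w θ) :=
  contDiff_bilinear contApply
    ((contDiff_superpose (G := H →L[ℝ] H) hQ).comp (hP.add (sol.contDiff.comp hw)))
    ((constCLM.contDiff.comp hv).add ((solDeriv 0).contDiff.comp hw))

lemma contDiff_weightedSource (hP : ContDiff ℝ (⊤ : ℕ∞) P)
    (hP' : ∀ i, ContDiff ℝ (⊤ : ℕ∞) fun θ => P' θ i)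
    (hP'' : ∀ i, ContDiff ℝ (⊤ : ℕ∞) fun θ => P'' θ i) (hv : ContDiff ℝ (⊤ : ℕ∞) v)
    (hw : ContDiff ℝ (⊤ : ℕ∞) w) :
    ContDiff ℝ (⊤ : ℕ∞) fun θ => weightedSource hQ (P θ) (P' θ) (P'' θ) (v θ) (w θ) := by
  have hy := hP.add (sol.contDiff.comp hw)
  have hy' (i : Fin 2) := (hP' i).add ((solDeriv i).contDiff.comp hw)
  have hy'' (i : Fin 2) := (toL2.contDiff.comp (hP'' i)).add ((solDeriv₂ i i).contDiff.comp hw)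
  have hh := (constCLM.contDiff.comp hv).add ((solDeriv 0).contDiff.comp hw)
  have hh' (i : Fin 2) := (solDeriv₂ i 0).contDiff.comp hw
  have hh'' (i : Fin 2) := (solDeriv₃ i 0).contDiff.comp hw
  have hleibniz : ContDiff ℝ (⊤ : ℕ∞) fun θ => ∑ i, leibniz hQ (P θ + sol (w θ))
      (P' θ i + solDeriv i (w θ)) (toL2 (P'' θ i) + solDeriv₂ i i (w θ))
      (constCLM (v θ) + solDeriv 0 (w θ)) (solDeriv₂ i 0 (w θ)) (solDeriv₃ i 0 (w θ)) :=
    ContDiff.sum fun i _ => contDiff_leibniz hQ hy (hy' i) (hy'' i) hh (hh' i) (hh'' i)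
  have hsource := toL2.contDiff.comp (contDiff_source hQ hP hv hw)
  exact (analysis.restrictScalars ℝ).contDiff.comp (hsource.sub hleibniz)

end Smoothness

variable {P : C(UnitAddTorus (Fin 2), H)} {P' P'' : Fin 2 → C(UnitAddTorus (Fin 2), H)}

lemma weightedSource_truncSeq (hP : ∀ i, HasTorusDeriv i P (P' i))
    (hP' : ∀ i, HasTorusDeriv i (P' i) (P'' i)) (v : H) (s : Finset (Fin 2 → ℤ))
    (w : (Fin 2 → ℤ) → H) (k : Fin 2 → ℤ) :
    weightedSource hQ P P' P'' v (truncSeq s w) k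
      = weight k • mFourierCoeff (source hQ P v (truncSeq s w)) k := by
  have hleibniz (i : Fin 2) := by
    have hconst := (hasTorusDeriv_const i v).add
      (hasTorusDeriv_trigPoly i (fun k => freq 0 k * solSymbol k) s w)
    rw [zero_add] at hconst
    exact analysis_leibniz hQ ((hP i).add (hasTorusDeriv_trigPoly i solSymbol s w))
      ((hP' i).add (hasTorusDeriv_trigPoly i _ s w)) hconst (hasTorusDeriv_trigPoly i _ s w) k
  simp only [weightedSource, source, map_sub, map_sum, sol_truncSeq, solDeriv_truncSeq,
    solDeriv₂_truncSeq, solDeriv₃_truncSeq, ← map_add, lp.coeFn_sub, Pi.sub_apply,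
    lp.coeFn_sum, Finset.sum_apply, analysis_toL2]
  rw [weight, sub_smul, one_smul, Finset.sum_smul]
  congr 1
  exact Finset.sum_congr rfl fun i _ => hleibniz i

lemma weightedSource_apply (hP : ∀ i, HasTorusDeriv i P (P' i))
    (hP' : ∀ i, HasTorusDeriv i (P' i) (P'' i)) (v : H) (w : CoeffSeq (Fin 2) H) (k : Fin 2 → ℤ) :
    weightedSource hQ P P' P'' v w k = weight k • mFourierCoeff (source hQ P v w) k := by
  have hcontDiff : ContDiff ℝ (⊤ : ℕ∞) fun w => weightedSource hQ P P' P'' v w :=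
    contDiff_weightedSource hQ contDiff_const (fun _ => contDiff_const) (fun _ => contDiff_const)
      contDiff_const contDiff_id
  have hweighted : Continuous fun w => weightedSource hQ P P' P'' v w k :=
    (lp.evalCLM ℝ (fun _ : Fin 2 → ℤ => H) 2 k).continuous.comp hcontDiff.continuous
  have hsource : Continuous fun w => weight k • mFourierCoeff (source hQ P v w) k :=
    ((fourierCoeffCLM k).continuous.comp
      (contDiff_source hQ contDiff_const contDiff_const contDiff_id).continuous).const_smul _
  refine tendsto_nhds_unique ((hweighted.tendsto w).comp (tendsto_truncSeq w)) ?_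
  refine ((hsource.tendsto w).comp (tendsto_truncSeq w)).congr fun s => ?_
  exact (weightedSource_truncSeq hQ hP hP' v s w k).symm

end Source

section Shift

open UnitAddTorus

variable {d H : Type*} [Fintype d] [NormedAddCommGroup H]

section NormedSpace

variable [NormedSpace ℂ H]

/-- The action of translations of the torus on sequences of Fourier coefficients. -/
def shift (a : UnitAddTorus d) : CoeffSeq d H →L[ℝ] CoeffSeq d H :=
  diag (fun k => mFourier k a) fun k => (norm_mFourier_apply k a).le

@[simp] lemma shift_apply (a : UnitAddTorus d) (w : CoeffSeq d H) (k : d → ℤ) :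
    shift a w k = mFourier k a • w k := rfl

lemma norm_shift (a : UnitAddTorus d) (w : CoeffSeq d H) : ‖shift a w‖ = ‖w‖ := by
  simp only [lp.norm_eq_tsum_rpow (p := 2) (by norm_num), shift_apply, norm_smul,
    norm_mFourier_apply, one_mul]

end NormedSpace

variable [InnerProductSpace ℂ H] [CompleteSpace H]

lemma ext_mFourierCoeff {q q' : C(UnitAddTorus d, H)}
    (h : ∀ k, mFourierCoeff q k = mFourierCoeff q' k) : q = q' := by
  refine sub_eq_zero.1 (eq_zero_of_mFourierCoeff_eq_zero fun k => ?_)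
  rw [← fourierCoeffCLM_apply, map_sub, fourierCoeffCLM_apply, fourierCoeffCLM_apply, h, sub_self]

lemma sumWave_shift (m : CoeffSeq d ℂ) (a : UnitAddTorus d) (w : CoeffSeq d H) :
    sumWave m (shift a w) = transl a (sumWave m w) :=
  ext_mFourierCoeff fun k => by
    rw [mFourierCoeff_transl, mFourierCoeff_sumWave, mFourierCoeff_sumWave, shift_apply, smul_comm]

end Shift

section AffinePart

open UnitAddTorus

variable {ι d H : Type*} [Fintype ι] [NormedAddCommGroup H] [NormedSpace ℝ H]

/-- The combination `b + ∑ i, a i • u i` of functions `a i` on the torus. When `a i` agrees with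
the `i`-th coordinate near the origin, it represents an affine map there. -/
def affinePart (a : ι → C(UnitAddTorus d, ℝ)) (b : H) (u : ι → H) : C(UnitAddTorus d, H) :=
  constCLM b + ∑ i, contBilin (ContinuousLinearMap.lsmul ℝ ℝ) (a i) (constCLM (u i))

lemma affinePart_apply (a : ι → C(UnitAddTorus d, ℝ)) (b : H) (u : ι → H) (x : UnitAddTorus d) :
    affinePart a b u x = b + ∑ i, a i x • u i := by
  simp [affinePart]

lemma affinePart_transl (s : UnitAddTorus d) (a : ι → C(UnitAddTorus d, ℝ)) (b : H) (u : ι → H) :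
    affinePart (fun i => transl s (a i)) b u = transl s (affinePart a b u) := by
  ext x; simp [affinePart_apply]

lemma hasTorusDeriv_affinePart [DecidableEq d] {i : d} {a a' : ι → C(UnitAddTorus d, ℝ)}
    (ha : ∀ j, HasTorusDeriv i (a j) (a' j)) (b : H) (u : ι → H) :
    HasTorusDeriv i (affinePart a b u) (affinePart a' 0 u) := by
  rw [affinePart, affinePart, map_zero]
  refine (hasTorusDeriv_const i b).add (HasTorusDeriv.sum fun j _ => ?_)
  have h := (ha j).contBilin (ContinuousLinearMap.lsmul ℝ ℝ) (hasTorusDeriv_const i (u j))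
  rwa [map_zero, add_zero] at h

lemma contDiff_affinePart {Θ : Type*} [NormedAddCommGroup Θ] [NormedSpace ℝ Θ]
    {a : Θ → ι → C(UnitAddTorus d, ℝ)} {b : Θ → H} {u : Θ → ι → H}
    (ha : ∀ i, ContDiff ℝ (⊤ : ℕ∞) fun θ => a θ i) (hb : ContDiff ℝ (⊤ : ℕ∞) b)
    (hu : ∀ i, ContDiff ℝ (⊤ : ℕ∞) fun θ => u θ i) :
    ContDiff ℝ (⊤ : ℕ∞) fun θ => affinePart (a θ) (b θ) (u θ) := by
  let const : H →L[ℝ] C(UnitAddTorus d, H) := constCLM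
  have hterm (i : ι) := contDiff_bilinear (contBilin (ContinuousLinearMap.lsmul ℝ ℝ)) (ha i)
    (const.contDiff.comp (hu i))
  exact (const.contDiff.comp hb).add (ContDiff.sum fun i _ => hterm i)

end AffinePart

section FixedPointMap

open UnitAddTorus

universe u

variable {H : Type u} [NormedAddCommGroup H] [InnerProductSpace ℂ H] [CompleteSpace H]
  {Q : H → H →L[ℝ] H} (hQ : ContDiff ℝ (⊤ : ℕ∞) Q)

/-- The slopes of the affine part of a disc. The second slope is chosen so that the mean of the
equation `∂₁y - i ∂₀y = Q(y) ∂₀y` is absorbed by the zeroth coefficient of `w`. -/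
def slopes (v : H) (w : CoeffSeq (Fin 2) H) : Fin 2 → H := ![v, Complex.I • v + w 0]

/-- The map whose fixed points `w`, for the parameter `t = 0`, give the solutions
`affinePart a b (slopes v w) + sol w` of `∂₁y - i ∂₀y = Q(y) ∂₀y` near the origin. The parameter
`t` translates the functions `a`. -/
def fixedPointMap (a : Fin 2 → C(UnitAddTorus (Fin 2), ℝ))
    (x : (Fin 2 → ℝ) × (H × H) × CoeffSeq (Fin 2) H) : CoeffSeq (Fin 2) H :=
  let affine (a : Fin 2 → C(UnitAddTorus (Fin 2), ℝ)) (b : H) :=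
    affinePart (fun j => transl (toTorus x.1) (a j)) b (slopes x.2.1.2 x.2.2)
  weightedSource hQ (affine a x.2.1.1) (fun i => affine (fun j => torusDeriv i (a j)) 0)
    (fun i => affine (fun j => torusDeriv i (torusDeriv i (a j))) 0) x.2.1.2 x.2.2

omit [CompleteSpace H] in
lemma contDiff_slopes (i : Fin 2) :
    ContDiff ℝ (⊤ : ℕ∞) fun x : H × CoeffSeq (Fin 2) H => slopes x.1 x.2 i := by
  have hmean : ContDiff ℝ (⊤ : ℕ∞) fun x : H × CoeffSeq (Fin 2) H => x.2 0 :=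
    (lp.evalCLM ℝ (fun _ : Fin 2 → ℤ => H) 2 0).contDiff.comp contDiff_snd
  fin_cases i
  · exact contDiff_fst
  · exact ((Jst H).contDiff.comp contDiff_fst).add hmean

variable {a : Fin 2 → C(UnitAddTorus (Fin 2), ℝ)}

lemma fixedPointMap_apply (ha : ∀ j, IsTorusSmooth (a j))
    (x : (Fin 2 → ℝ) × (H × H) × CoeffSeq (Fin 2) H) (k : Fin 2 → ℤ) :
    fixedPointMap hQ a x k = weight k • mFourierCoeff (source hQ
      (affinePart (fun j => transl (toTorus x.1) (a j)) x.2.1.1 (slopes x.2.1.2 x.2.2))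
      x.2.1.2 x.2.2) k :=
  weightedSource_apply hQ
    (fun i => hasTorusDeriv_affinePart (fun j => ((ha j).hasTorusDeriv i).transl _) _ _)
    (fun i => hasTorusDeriv_affinePart
      (fun j => (((ha j).torusDeriv i).hasTorusDeriv i).transl _) _ _) _ _ k

lemma source_shift (P : C(UnitAddTorus (Fin 2), H)) (v : H) (w : CoeffSeq (Fin 2) H)
    (s : UnitAddTorus (Fin 2)) :
    source hQ (transl s P) v (shift s w) = transl s (source hQ P v w) := by
  ext x
  simp [source, sol, solDeriv, sumWave_shift]

lemma fixedPointMap_shift (ha : ∀ j, IsTorusSmooth (a j)) (t : Fin 2 → ℝ) (b v : H)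
    (w : CoeffSeq (Fin 2) H) :
    fixedPointMap hQ a (t, (b, v), shift (toTorus t) w)
      = shift (toTorus t) (fixedPointMap hQ a (0, (b, v), w)) := by
  have hslopes : slopes v (shift (toTorus t) w) = slopes v w := by
    simp [slopes, mFourier_zero]
  ext k
  rw [shift_apply, fixedPointMap_apply hQ ha, fixedPointMap_apply hQ ha, hslopes,
    affinePart_transl, affinePart_transl, source_shift, mFourierCoeff_transl, smul_comm,
    toTorus_zero, transl_zero]

omit [CompleteSpace H] in
lemma contDiff_affinePart_translate (ha : ∀ j, IsTorusSmooth (a j))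
    {b : (Fin 2 → ℝ) × (H × H) × CoeffSeq (Fin 2) H → H} (hb : ContDiff ℝ (⊤ : ℕ∞) b) :
    ContDiff ℝ (⊤ : ℕ∞) fun x : (Fin 2 → ℝ) × (H × H) × CoeffSeq (Fin 2) H =>
      affinePart (fun j => transl (toTorus x.1) (a j)) (b x) (slopes x.2.1.2 x.2.2) :=
  contDiff_affinePart (fun j => (ha j).comp contDiff_fst) hb fun i =>
    (contDiff_slopes i).comp ((contDiff_snd.comp (contDiff_fst.comp contDiff_snd)).prodMk
      (contDiff_snd.comp contDiff_snd))

lemma contDiff_fixedPointMap (ha : ∀ j, IsTorusSmooth (a j)) :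
    ContDiff ℝ (⊤ : ℕ∞) (fixedPointMap hQ a) :=
  contDiff_weightedSource hQ
    (contDiff_affinePart_translate ha (contDiff_fst.comp (contDiff_fst.comp contDiff_snd)))
    (fun i => contDiff_affinePart_translate (fun j => (ha j).torusDeriv i) contDiff_const)
    (fun i => contDiff_affinePart_translate (fun j => ((ha j).torusDeriv i).torusDeriv i)
      contDiff_const)
    (contDiff_snd.comp (contDiff_fst.comp contDiff_snd)) (contDiff_snd.comp contDiff_snd)

lemma hasFDerivAt_bilinear_zero {A B G Θ : Type*} [NormedAddCommGroup A] [NormedSpace ℝ A]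
    [NormedAddCommGroup B] [NormedSpace ℝ B] [NormedAddCommGroup G] [NormedSpace ℝ G]
    [NormedAddCommGroup Θ] [NormedSpace ℝ Θ] (T : A →L[ℝ] B →L[ℝ] G) {c : Θ → A} {b : Θ → B}
    {θ : Θ} (hc : DifferentiableAt ℝ c θ) (hb : DifferentiableAt ℝ b θ) (hc0 : c θ = 0)
    (hb0 : b θ = 0) : HasFDerivAt (fun θ => T (c θ) (b θ)) (0 : Θ →L[ℝ] G) θ := by
  refine (T.hasFDerivAt_of_bilinear hc.hasFDerivAt hb.hasFDerivAt).congr_fderiv ?_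
  ext
  simp [hc0, hb0]

lemma hasFDerivAt_source_zero {Θ : Type*} [NormedAddCommGroup Θ] [NormedSpace ℝ Θ]
    {P : Θ → C(UnitAddTorus (Fin 2), H)} {v : Θ → H} {w : Θ → CoeffSeq (Fin 2) H}
    (hP : ContDiff ℝ (⊤ : ℕ∞) P) (hv : ContDiff ℝ (⊤ : ℕ∞) v) (hw : ContDiff ℝ (⊤ : ℕ∞) w) {θ : Θ}
    (hv0 : v θ = 0) (hw0 : w θ = 0) (hQP : ∀ x, Q (P θ x) = 0) :
    HasFDerivAt (fun θ => source hQ (P θ) (v θ) (w θ))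
      (0 : Θ →L[ℝ] C(UnitAddTorus (Fin 2), H)) θ := by
  have hcoeff := (contDiff_superpose (G := H →L[ℝ] H) hQ).comp (hP.add (sol.contDiff.comp hw))
  have hfield := (constCLM.contDiff.comp hv).add ((solDeriv 0).contDiff.comp hw)
  refine hasFDerivAt_bilinear_zero contApply (hcoeff.differentiable (by simp) θ)
    (hfield.differentiable (by simp) θ) ?_ ?_
  · ext1 x
    simp [hw0, hQP]
  · simp [hv0, hw0]

lemma CoeffSeq.hasFDerivAt_zero {d Θ R : Type*} [NormedAddCommGroup Θ] [NormedSpace ℝ Θ]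
    [NormedAddCommGroup R] [NormedSpace ℝ R] {f : Θ → CoeffSeq d R} {θ : Θ}
    (hf : DifferentiableAt ℝ f θ)
    (h : ∀ k, HasFDerivAt (fun θ => f θ k) (0 : Θ →L[ℝ] R) θ) :
    HasFDerivAt f (0 : Θ →L[ℝ] CoeffSeq d R) θ := by
  refine hf.hasFDerivAt.congr_fderiv ?_
  ext u k
  have hk := (lp.evalCLM ℝ (fun _ : d → ℤ => R) 2 k).hasFDerivAt.comp θ hf.hasFDerivAt
  exact DFunLike.congr_fun (hk.unique (h k)) u

variable {p : H}

lemma hasFDerivAt_fixedPointMap (ha : ∀ j, IsTorusSmooth (a j)) (hp : Q p = 0) (t : Fin 2 → ℝ) :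
    HasFDerivAt (fixedPointMap hQ a) (0 : _ →L[ℝ] CoeffSeq (Fin 2) H) (t, (p, 0), 0) := by
  refine CoeffSeq.hasFDerivAt_zero ((contDiff_fixedPointMap hQ ha).differentiable (by simp) _)
    fun k => ?_
  simp only [fixedPointMap_apply hQ ha]
  have hsource := hasFDerivAt_source_zero hQ
    (contDiff_affinePart_translate ha (contDiff_fst.comp (contDiff_fst.comp contDiff_snd)))
    (contDiff_snd.comp (contDiff_fst.comp contDiff_snd)) (contDiff_snd.comp contDiff_snd)
    (θ := (t, (p, 0), 0)) rfl rfl fun x => by simp [affinePart_apply, slopes, hp]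
  have hcoeff := ((fourierCoeffCLM k).hasFDerivAt.comp _ hsource).const_smul (weight k)
  rwa [ContinuousLinearMap.comp_zero, smul_zero] at hcoeff

lemma fixedPointMap_base (ha : ∀ j, IsTorusSmooth (a j)) (t : Fin 2 → ℝ) :
    fixedPointMap hQ a (t, (p, 0), 0) = 0 := by
  ext k
  have hsource (P : C(UnitAddTorus (Fin 2), H)) : source hQ P 0 0 = 0 := by simp [source]
  rw [fixedPointMap_apply hQ ha, hsource, ← fourierCoeffCLM_apply, map_zero, smul_zero]
  rfl

end FixedPointMap

section InverseFunction

variable {Z P X : Type*} [NormedAddCommGroup Z] [NormedSpace ℝ Z] [NormedAddCommGroup P]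
  [NormedSpace ℝ P] [NormedAddCommGroup X] [NormedSpace ℝ X]

lemma exists_openPartialHomeomorph_contDiffOn_symm [CompleteSpace X] {Φ : X → P}
    (hΦ : ContDiff ℝ (⊤ : ℕ∞) Φ) {Φ' : X ≃L[ℝ] P} {x : X}
    (hx : HasFDerivAt Φ (Φ' : X →L[ℝ] P) x) :
    ∃ e : OpenPartialHomeomorph X P, ⇑e = Φ ∧ x ∈ e.source ∧
      ContDiffOn ℝ (⊤ : ℕ∞) e.symm e.target := by
  have htop : ((⊤ : ℕ∞) : WithTop ℕ∞) ≠ 0 := by simp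
  have hstrict := hΦ.contDiffAt.hasStrictFDerivAt' hx htop
  let invertible : Set X := {y | fderiv ℝ Φ y ∈ range ((↑) : (X ≃L[ℝ] P) → X →L[ℝ] P)}
  have hopen : IsOpen invertible :=
    ContinuousLinearEquiv.isOpen.preimage (hΦ.continuous_fderiv htop)
  let e := (hstrict.toOpenPartialHomeomorph Φ).restrOpen invertible hopen
  refine ⟨e, rfl, ⟨hstrict.mem_toOpenPartialHomeomorph_source, Φ', hx.fderiv.symm⟩, ?_⟩
  intro y hy
  obtain ⟨e', he'⟩ : e.symm y ∈ invertible := (e.map_target hy).2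
  have hderiv : HasFDerivAt e (e' : X →L[ℝ] P) (e.symm y) := by
    rw [he']
    exact (hΦ.differentiable htop _).hasFDerivAt
  exact (e.contDiffAt_symm hy hderiv hΦ.contDiffAt).contDiffWithinAt

variable [CompleteSpace P] [CompleteSpace X]

lemma eventually_contDiffAt_of_norm_eq [CompleteSpace Z] {F : Z × P × X → X}
    (hF : ContDiff ℝ (⊤ : ℕ∞) F) {p₀ : P}
    (hF' : HasFDerivAt F (0 : Z × P × X →L[ℝ] X) (0, p₀, 0)) :
    ∀ᶠ x : P × X in 𝓝 (p₀, 0), ∀ U : Z → X, (∀ t, ‖U t‖ = ‖x.2‖) →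
      (∀ t, F (t, x.1, U t) = U t) → ContDiffAt ℝ (⊤ : ℕ∞) U 0 := by
  let Φ : Z × P × X → Z × P × X := fun θ => θ - (0, 0, F θ)
  have hΦ : ContDiff ℝ (⊤ : ℕ∞) Φ :=
    contDiff_id.sub (contDiff_const.prodMk (contDiff_const.prodMk hF))
  have hΦ' : HasFDerivAt Φ (ContinuousLinearEquiv.refl ℝ (Z × P × X) :
      Z × P × X →L[ℝ] Z × P × X) (0, p₀, 0) := by
    have h := (hasFDerivAt_id (𝕜 := ℝ) ((0, p₀, 0) : Z × P × X)).sub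
      ((hasFDerivAt_const (0 : Z) _).prodMk ((hasFDerivAt_const (0 : P) _).prodMk hF'))
    refine h.congr_fderiv ?_
    ext <;> simp
  obtain ⟨e, heΦ, hmem, he⟩ := exists_openPartialHomeomorph_contDiffOn_symm hΦ hΦ'
  obtain ⟨ε, hε, hball⟩ := Metric.isOpen_iff.1 e.open_source _ hmem
  filter_upwards [Metric.ball_mem_nhds _ hε] with x hx U hUnorm hUF
  obtain ⟨hx₁, hx₂⟩ : dist x.1 p₀ < ε ∧ ‖x.2‖ < ε := by
    rwa [mem_ball, Prod.dist_eq, max_lt_iff, dist_zero_right] at hx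
  have hvalue (t : Z) : e (t, x.1, U t) = (t, x.1, 0) := by simp [heΦ, Φ, hUF]
  have hsource : ∀ t ∈ ball (0 : Z) ε, (t, x.1, U t) ∈ e.source := fun t ht => by
    refine hball ?_
    rw [mem_ball, Prod.dist_eq, Prod.dist_eq, max_lt_iff, max_lt_iff, dist_zero_right (U t), hUnorm]
    exact ⟨ht, hx₁, hx₂⟩
  have htarget : (0, x.1, 0) ∈ e.target := by
    rw [← hvalue]
    exact e.map_source (hsource 0 (mem_ball_self hε))
  have hsymm : ContDiffAt ℝ (⊤ : ℕ∞) (fun t : Z => (e.symm (t, x.1, 0)).2.2) 0 :=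
    ((he.contDiffAt (e.open_target.mem_nhds htarget)).comp (0 : Z)
      (f := fun t => (t, x.1, (0 : X)))
      (contDiffAt_id.prodMk (contDiffAt_const.prodMk contDiffAt_const))).snd.snd
  refine hsymm.congr_of_eventuallyEq ?_
  filter_upwards [Metric.ball_mem_nhds _ hε] with t ht
  rw [← hvalue, e.left_inv (hsource t ht)]

lemma eventually_exists_fixedPoint {F : P × X → X} (hF : ContDiff ℝ (⊤ : ℕ∞) F) {p₀ : P}
    (hF' : HasFDerivAt F (0 : P × X →L[ℝ] X) (p₀, 0)) (hF₀ : F (p₀, 0) = 0) (S : X →L[ℝ] P)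
    {N : Set (P × X)} (hN : N ∈ 𝓝 (p₀, 0)) :
    ∀ᶠ q in 𝓝 p₀, ∃ x ∈ N, x.1 + S x.2 = q ∧ F x = x.2 := by
  let Φ : P × X → P × X := fun x => (x.1 + S x.2, x.2 - F x)
  have hΦ : ContDiff ℝ (⊤ : ℕ∞) Φ :=
    (contDiff_fst.add (S.contDiff.comp contDiff_snd)).prodMk (contDiff_snd.sub hF)
  let Φ' : P × X →L[ℝ] P × X := (ContinuousLinearMap.fst ℝ P X +
    S.comp (ContinuousLinearMap.snd ℝ P X)).prod (ContinuousLinearMap.snd ℝ P X - 0)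
  have hΦ' : HasFDerivAt Φ Φ' (p₀, 0) :=
    (hasFDerivAt_fst.add (S.hasFDerivAt.comp _ hasFDerivAt_snd)).prodMk (hasFDerivAt_snd.sub hF')
  have hsurjective : Φ'.range = ⊤ := by
    refine LinearMap.range_eq_top.2 fun q => ⟨(q.1 - S q.2, q.2), ?_⟩
    ext <;> simp [Φ']
  have hmap := (hΦ.contDiffAt.hasStrictFDerivAt' hΦ' (by simp)).map_nhds_eq_of_surj hsurjective
  have hΦ₀ : Φ (p₀, 0) = (p₀, 0) := by simp [Φ, hF₀]
  rw [hΦ₀] at hmap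
  have himage : Φ '' N ∈ 𝓝 ((p₀, 0) : P × X) := hmap ▸ image_mem_map hN
  filter_upwards [(Continuous.prodMk_left (0 : X)).continuousAt.eventually_mem himage]
    with q ⟨x, hx, hxq⟩
  exact ⟨x, hx, congrArg Prod.fst hxq, (sub_eq_zero.1 (congrArg Prod.snd hxq)).symm⟩

end InverseFunction

section TorusCoordinates

open UnitAddTorus

universe u

lemma exists_contDiff_eqOn_ball {E G : Type*} [NormedAddCommGroup E] [NormedSpace ℝ E]
    [HasContDiffBump E] [NormedAddCommGroup G] [NormedSpace ℝ G] {U : Set E} (hU : IsOpen U)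
    {g : E → G} (hg : ContDiffOn ℝ (⊤ : ℕ∞) g U) {x : E} (hx : x ∈ U) :
    ∃ f : E → G, ContDiff ℝ (⊤ : ℕ∞) f ∧ ∃ r > 0, ball x r ⊆ U ∧ EqOn f g (ball x r) := by
  obtain ⟨ρ, hρ, hball⟩ := Metric.isOpen_iff.1 hU x hx
  let β : ContDiffBump x := ⟨ρ / 4, ρ / 2, by linarith, by linarith⟩
  refine ⟨fun y => β y • g y, contDiff_iff_contDiffAt.2 fun y => ?_, ρ / 4, by linarith,
    (ball_subset_ball (by linarith)).trans hball, fun y hy => ?_⟩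
  · by_cases hy : y ∈ ball x ρ
    · exact β.contDiff.contDiffAt.smul (hg.contDiffAt (hU.mem_nhds (hball hy)))
    · have hβ : β =ᶠ[𝓝 y] 0 := by
        rw [← notMem_tsupport_iff_eventuallyEq, β.tsupport_eq]
        exact fun h => hy (closedBall_subset_ball (show ρ / 2 < ρ by linarith) h)
      refine (contDiffAt_const (c := (0 : G))).congr_of_eventuallyEq ?_
      filter_upwards [hβ] with z hz
      simp [hz]
  · simp [β.one_of_mem_closedBall (ball_subset_closedBall hy)]

lemma exists_contDiff_exp_two_pi_I_mul_eq : ∃ ξ : ℂ → ℝ, ContDiff ℝ (⊤ : ℕ∞) ξ ∧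
    ∀ᶠ x : ℝ in 𝓝 0, ξ (Complex.exp (2 * Real.pi * Complex.I * x)) = x := by
  have hlog : ContDiffOn ℝ (⊤ : ℕ∞) (fun z => (Complex.log z).im / (2 * Real.pi))
      Complex.slitPlane := fun z hz =>
    ((Complex.imCLM.contDiff.contDiffAt.comp z
      ((Complex.contDiffAt_log hz).restrict_scalars ℝ)).div_const _).contDiffWithinAt
  obtain ⟨ξ, hξ, r, hr, -, hξlog⟩ :=
    exists_contDiff_eqOn_ball Complex.isOpen_slitPlane hlog Complex.one_mem_slitPlane
  refine ⟨ξ, hξ, ?_⟩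
  have hcont : Continuous fun x : ℝ => Complex.exp (2 * Real.pi * Complex.I * x) := by fun_prop
  have hball : ∀ᶠ x : ℝ in 𝓝 0, Complex.exp (2 * Real.pi * Complex.I * x) ∈ ball 1 r :=
    hcont.continuousAt.eventually_mem (by simpa using ball_mem_nhds (1 : ℂ) hr)
  filter_upwards [hball, Ioo_mem_nhds (show (-(1 / 2) : ℝ) < 0 by norm_num)
    (show (0 : ℝ) < 1 / 2 by norm_num)] with x hx ⟨hlower, hupper⟩
  have him : (2 * Real.pi * Complex.I * x : ℂ).im = 2 * Real.pi * x := by simp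
  rw [hξlog hx]
  beta_reduce
  rw [Complex.log_exp (by rw [him]; nlinarith [Real.pi_pos])
    (by rw [him]; nlinarith [Real.pi_pos]), him]
  field_simp

variable {d : Type*} [Fintype d]

lemma isTorusSmooth_mFourier (k : d → ℤ) : IsTorusSmooth (mFourier k) := by
  have horbit : (fun t : d → ℝ => transl (toTorus t) (mFourier k))
      = fun t => mFourier k (toTorus t) • mFourier k := by
    ext t x; simp [mFourier_apply_add, mul_comm]
  simp only [IsTorusSmooth, horbit, mFourier_toTorus]
  have hexp (i : d) : ContDiff ℝ (⊤ : ℕ∞) fun t : d → ℝ => Complex.exp (freq i k * t i) :=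
    (contDiff_const.mul (Complex.ofRealCLM.contDiff.comp (contDiff_apply ℝ ℝ i))).cexp
  have hprod : ContDiff ℝ (⊤ : ℕ∞) fun t : d → ℝ => ∏ i, Complex.exp (freq i k * t i) :=
    contDiff_prod fun i _ => hexp i
  exact hprod.smul contDiff_const

protected lemma IsTorusSmooth.superpose {A G : Type u} [NormedAddCommGroup A] [NormedSpace ℝ A]
    [NormedAddCommGroup G] [NormedSpace ℝ G] {M : A → G} (hM : ContDiff ℝ (⊤ : ℕ∞) M)
    {q : C(UnitAddTorus d, A)} (hq : IsTorusSmooth q) : IsTorusSmooth (superpose hM q) := by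
  have horbit : (fun t : d → ℝ => transl (toTorus t) (_root_.superpose hM q))
      = _root_.superpose hM ∘ fun t => transl (toTorus t) q := rfl
  rw [IsTorusSmooth, horbit]
  exact (contDiff_superpose hM).comp hq

lemma exists_isTorusSmooth_apply_toTorus_eq : ∃ a : d → C(UnitAddTorus d, ℝ),
    (∀ i, IsTorusSmooth (a i)) ∧ ∀ᶠ t : d → ℝ in 𝓝 0, ∀ i, a i (toTorus t) = t i := by
  classical
  obtain ⟨ξ, hξ, hξexp⟩ := exists_contDiff_exp_two_pi_I_mul_eq
  refine ⟨fun i => superpose hξ (mFourier (Pi.single i 1)),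
    fun i => (isTorusSmooth_mFourier _).superpose hξ, eventually_all.2 fun i => ?_⟩
  have hcoord : Tendsto (fun t : d → ℝ => t i) (𝓝 0) (𝓝 0) := (continuous_apply i).tendsto 0
  filter_upwards [hcoord.eventually hξexp] with t ht
  rw [superpose_apply, mFourier_toTorus, Finset.prod_eq_single i
    (fun j _ hj => by simp [freq, hj]) (by simp)]
  simpa [freq] using ht

lemma torusDeriv_eq_ite [DecidableEq d] {a : C(UnitAddTorus d, ℝ)} (ha : IsTorusSmooth a) {j : d}
    {t : d → ℝ} (h : ∀ᶠ s in 𝓝 t, a (toTorus s) = s j) (i : d) :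
    torusDeriv i a (toTorus t) = if j = i then 1 else 0 := by
  have hproj : fderiv ℝ (fun s => a (toTorus s)) t = ContinuousLinearMap.proj j :=
    (Filter.EventuallyEq.fderiv_eq h).trans
      (ContinuousLinearMap.proj (R := ℝ) (φ := fun _ : d => ℝ) j).fderiv
  rw [← ha.fderiv_comp_toTorus_single, hproj]
  simp [Pi.single_apply]

end TorusCoordinates

section LocalSolvability

open UnitAddTorus

universe u

lemma isTorusSmooth_affinePart {ι d H : Type*} [Fintype ι] [Fintype d] [NormedAddCommGroup H]
    [NormedSpace ℝ H] {a : ι → C(UnitAddTorus d, ℝ)} (ha : ∀ j, IsTorusSmooth (a j)) (b : H)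
    (u : ι → H) : IsTorusSmooth (affinePart a b u) := by
  simp only [IsTorusSmooth, ← affinePart_transl]
  exact contDiff_affinePart ha contDiff_const fun _ => contDiff_const

lemma isTorusSmooth_sumWave {d H : Type*} [Fintype d] [NormedAddCommGroup H]
    [InnerProductSpace ℂ H] [CompleteSpace H] (m : CoeffSeq d ℂ) {w : CoeffSeq d H}
    (h : ContDiffAt ℝ (⊤ : ℕ∞) (fun t : d → ℝ => shift (toTorus t) w) 0) :
    IsTorusSmooth (sumWave m w) := by
  refine isTorusSmooth_of_contDiffAt_zero ?_
  simp only [← sumWave_shift]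
  exact (sumWave m).contDiff.contDiffAt.comp 0 h

lemma IsTorusSmooth.add {d G : Type*} [Fintype d] [NormedAddCommGroup G] [NormedSpace ℝ G]
    {q q' : C(UnitAddTorus d, G)} (hq : IsTorusSmooth q) (hq' : IsTorusSmooth q') :
    IsTorusSmooth (q + q') := by
  have horbit : (fun t : d → ℝ => transl (toTorus t) (q + q'))
      = fun t => transl (toTorus t) q + transl (toTorus t) q' := rfl
  rw [IsTorusSmooth, horbit]
  exact ContDiff.add hq hq'

variable {H : Type u} [NormedAddCommGroup H] [InnerProductSpace ℂ H] [CompleteSpace H]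

lemma hasTorusDeriv_sol {w : CoeffSeq (Fin 2) H} (h : IsTorusSmooth (sol w)) (i : Fin 2) :
    HasTorusDeriv i (sol w) (solDeriv i w) := by
  have hderiv : torusDeriv i (sol w) = solDeriv i w := ext_mFourierCoeff fun k => by
    rw [(h.hasTorusDeriv i).mFourierCoeff_eq, sol, solDeriv, mFourierCoeff_sumWave,
      mFourierCoeff_sumWave, weightSeq_apply, weightSeq_apply, smul_smul, mul_assoc]
  exact hderiv ▸ h.hasTorusDeriv i

omit [CompleteSpace H] in
lemma mFourierCoeff_smul {d : Type*} [Fintype d] (c : ℂ) (q : C(UnitAddTorus d, H)) (k : d → ℤ) :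
    mFourierCoeff (c • q) k = c • mFourierCoeff q k := by
  simp only [mFourierCoeff, ContinuousMap.smul_apply, smul_comm _ c, MeasureTheory.integral_smul]

lemma add_I_smul_solDeriv_zero {w : CoeffSeq (Fin 2) H} {u : C(UnitAddTorus (Fin 2), H)}
    (h : ∀ k, w k = weight k • mFourierCoeff u k) :
    u + Complex.I • solDeriv 0 w = wave 0 (w 0) + solDeriv 1 w := by
  refine ext_mFourierCoeff fun k => ?_
  have hu : mFourierCoeff u k = (weight k)⁻¹ • w k := by
    rw [h, smul_smul, inv_mul_cancel₀ (weight_ne_zero k), one_smul]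
  have hderiv (i : Fin 2) : mFourierCoeff (solDeriv i w) k
      = (freq i k * (dbarSymbol k)⁻¹ * (weight k)⁻¹) • w k := mFourierCoeff_sumWave _ w k
  have hI : mFourierCoeff (Complex.I • solDeriv 0 w) k
      = Complex.I • mFourierCoeff (solDeriv 0 w) k := mFourierCoeff_smul _ _ k
  rw [← fourierCoeffCLM_apply, ← fourierCoeffCLM_apply, map_add, map_add]
  simp only [fourierCoeffCLM_apply, hI, hderiv, hu, mFourierCoeff_wave]
  rcases eq_or_ne k 0 with rfl | hk
  · simp [weight, freq_zero]
  · have hdbar : dbarSymbol k * (dbarSymbol k)⁻¹ = 1 :=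
      mul_inv_cancel₀ (norm_pos_iff.1 (one_pos.trans_le (one_le_norm_dbarSymbol hk)))
    rw [if_neg hk, zero_add, smul_smul, ← add_smul]
    congr 1
    rw [dbarSymbol] at hdbar ⊢
    linear_combination -(weight k)⁻¹ * hdbar

/-- The function built from the parameters `(b, v)` and the coefficients `w`. It is a candidate
solution of the nonlinear Cauchy-Riemann equation. -/
def ansatz (a : Fin 2 → C(UnitAddTorus (Fin 2), ℝ)) (x : (H × H) × CoeffSeq (Fin 2) H) :
    C(UnitAddTorus (Fin 2), H) :=
  affinePart a x.1.1 (slopes x.1.2 x.2) + sol x.2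

variable {a : Fin 2 → C(UnitAddTorus (Fin 2), ℝ)}

lemma continuous_ansatz : Continuous (ansatz (H := H) a) := by
  have haffine : ContDiff ℝ (⊤ : ℕ∞) fun x : (H × H) × CoeffSeq (Fin 2) H =>
      affinePart a x.1.1 (slopes x.1.2 x.2) :=
    contDiff_affinePart (fun _ => contDiff_const) (contDiff_fst.comp contDiff_fst) fun i =>
      (contDiff_slopes i).comp ((contDiff_snd.comp contDiff_fst).prodMk contDiff_snd)
  exact haffine.continuous.add (sol.continuous.comp continuous_snd)

lemma torusDeriv_ansatz (ha : ∀ j, IsTorusSmooth (a j)) {x : (H × H) × CoeffSeq (Fin 2) H}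
    (hx : IsTorusSmooth (sol x.2)) {i : Fin 2} {s : UnitAddTorus (Fin 2)}
    (hs : ∀ j, torusDeriv i (a j) s = if j = i then 1 else 0) :
    torusDeriv i (ansatz a x) s = slopes x.1.2 x.2 i + solDeriv i x.2 s := by
  have hansatz : IsTorusSmooth (ansatz a x) :=
    (isTorusSmooth_affinePart ha _ _).add hx
  have hderiv := (hasTorusDeriv_affinePart (fun j => (ha j).hasTorusDeriv i) x.1.1
    (slopes x.1.2 x.2)).add (hasTorusDeriv_sol hx i)
  rw [(hansatz.hasTorusDeriv i).unique hderiv, ContinuousMap.add_apply, affinePart_apply, zero_add]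
  simp [hs]

variable {Q : H → H →L[ℝ] H} (hQ : ContDiff ℝ (⊤ : ℕ∞) Q)

lemma cauchyRiemann_ansatz (ha : ∀ j, IsTorusSmooth (a j)) {x : (H × H) × CoeffSeq (Fin 2) H}
    (hx : IsTorusSmooth (sol x.2)) (hfix : fixedPointMap hQ a (0, x) = x.2)
    {s : UnitAddTorus (Fin 2)}
    (hs : ∀ i j, torusDeriv i (a j) s = if j = i then 1 else 0) :
    torusDeriv 1 (ansatz a x) s = Complex.I • torusDeriv 0 (ansatz a x) s
      + Q (ansatz a x s) (torusDeriv 0 (ansatz a x) s) := by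
  have hcoeff (k : Fin 2 → ℤ) : x.2 k = weight k •
      mFourierCoeff (source hQ (affinePart a x.1.1 (slopes x.1.2 x.2)) x.1.2 x.2) k := by
    conv_lhs => rw [← hfix, fixedPointMap_apply hQ ha]
    simp
  have hdbar : Q (ansatz a x s) (x.1.2 + solDeriv 0 x.2 s) + Complex.I • solDeriv 0 x.2 s
      = x.2 0 + solDeriv 1 x.2 s := by
    have hfun := DFunLike.congr_fun (add_I_smul_solDeriv_zero hcoeff) s
    rw [ContinuousMap.add_apply, ContinuousMap.add_apply, wave_apply, mFourier_zero] at hfun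
    rwa [ContinuousMap.one_apply, one_smul] at hfun
  rw [torusDeriv_ansatz ha hx (hs 0), torusDeriv_ansatz ha hx (hs 1)]
  simp only [slopes, Matrix.cons_val_zero, Matrix.cons_val_one]
  rw [add_assoc, ← hdbar, smul_add]
  abel

variable {p : H} {r : ℝ}

include hQ in
lemma eventually_exists_isTorusSmooth (ha : ∀ j, IsTorusSmooth (a j)) (ha₀ : ∀ j, a j 0 = 0)
    (hδ : ∀ i j, torusDeriv i (a j) 0 = if j = i then 1 else 0) (hp : Q p = 0) (hr : 0 < r) :
    ∀ᶠ v in 𝓝 (0 : H), ∃ y : C(UnitAddTorus (Fin 2), H), IsTorusSmooth y ∧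
      (∀ s, y s ∈ ball p r) ∧
      (∀ s, (∀ i j, torusDeriv i (a j) s = if j = i then 1 else 0) →
        torusDeriv 1 y s = Complex.I • torusDeriv 0 y s + Q (y s) (torusDeriv 0 y s)) ∧
      y 0 = p ∧ torusDeriv 0 y 0 = v := by
  have hF := contDiff_fixedPointMap hQ ha
  have hF' := hasFDerivAt_fixedPointMap hQ ha hp 0
  have hnear : ∀ᶠ x in 𝓝 (((p, 0), 0) : (H × H) × CoeffSeq (Fin 2) H),
      ansatz a x ∈ ball (ContinuousMap.const _ p) r := by
    refine continuous_ansatz.continuousAt.eventually_mem ?_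
    have hbase : ansatz a (((p, 0), 0) : (H × H) × CoeffSeq (Fin 2) H)
        = ContinuousMap.const _ p := by
      ext s
      simp [ansatz, affinePart_apply, slopes]
    rw [hbase]
    exact ball_mem_nhds _ hr
  let eval : C(UnitAddTorus (Fin 2), H) →L[ℝ] H := ContinuousMap.evalCLM ℝ 0
  have hF'₀ := hF'.comp ((p, 0), 0) (hasFDerivAt_prodMk_right (𝕜 := ℝ) (0 : Fin 2 → ℝ) _)
  rw [ContinuousLinearMap.zero_comp] at hF'₀
  have hsolve := eventually_exists_fixedPoint (hF.comp (contDiff_const.prodMk contDiff_id)) hF'₀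
    (fixedPointMap_base hQ ha 0) ((eval.comp sol).prod (eval.comp (solDeriv 0)))
    ((eventually_contDiffAt_of_norm_eq hF hF').and hnear)
  filter_upwards [(Continuous.prodMk_right p).continuousAt.eventually hsolve]
    with v ⟨x, ⟨hsmooth, hball⟩, hjet, hfix⟩
  have horbit : ContDiffAt ℝ (⊤ : ℕ∞) (fun t : Fin 2 → ℝ => shift (toTorus t) x.2) 0 :=
    hsmooth _ (fun t => norm_shift _ _) fun t => by
      rw [fixedPointMap_shift hQ ha]
      exact congrArg _ hfix
  have hsol : IsTorusSmooth (sol x.2) := isTorusSmooth_sumWave _ horbit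
  refine ⟨ansatz a x, (isTorusSmooth_affinePart ha _ _).add hsol, fun s => ?_,
    fun s hs => cauchyRiemann_ansatz hQ ha hsol hfix hs, ?_, ?_⟩
  · exact (ContinuousMap.dist_apply_le_dist s).trans_lt hball
  · have hvalue : x.1.1 + sol x.2 0 = p := congrArg Prod.fst hjet
    simpa [ansatz, affinePart_apply, ha₀] using hvalue
  · rw [torusDeriv_ansatz ha hsol (hδ 0)]
    exact congrArg Prod.snd hjet

lemma IsTorusSmooth.fderiv_comp_toTorus_comp {d G V : Type*} [Fintype d] [DecidableEq d]
    [NormedAddCommGroup G] [NormedSpace ℝ G] [NormedAddCommGroup V] [NormedSpace ℝ V]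
    {q : C(UnitAddTorus d, G)} (hq : IsTorusSmooth q) (σ : V →L[ℝ] (d → ℝ)) {h : V} {c : ℝ} {i : d}
    (hσ : σ h = c • Pi.single i 1) (z : V) :
    fderiv ℝ (fun z => q (toTorus (σ z))) z h = c • torusDeriv i q (toTorus (σ z)) := by
  have hq' : DifferentiableAt ℝ (fun t => q (toTorus t)) (σ z) :=
    hq.contDiff_comp_toTorus.differentiable (by simp) _
  have hcomp : fderiv ℝ (fun z => q (toTorus (σ z))) z = _ :=
    (hq'.hasFDerivAt.comp z σ.hasFDerivAt).fderiv
  rw [hcomp, ContinuousLinearMap.comp_apply, hσ, map_smul, hq.fderiv_comp_toTorus_single]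

include hQ in
theorem eventually_exists_cauchyRiemann (hp : Q p = 0) (hr : 0 < r) :
    ∀ᶠ v in 𝓝 (0 : H), ∃ f : ℂ → H, ContDiff ℝ (⊤ : ℕ∞) f ∧ (∀ ζ, f ζ ∈ ball p r) ∧
      (∀ ζ ∈ ball (0 : ℂ) 1, fderiv ℝ f ζ Complex.I
        = Complex.I • fderiv ℝ f ζ 1 + Q (f ζ) (fderiv ℝ f ζ 1)) ∧
      f 0 = p ∧ fderiv ℝ f 0 1 = v := by
  obtain ⟨a, ha, hcoord⟩ := exists_isTorusSmooth_apply_toTorus_eq (d := Fin 2)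
  have hδ : ∀ᶠ t : Fin 2 → ℝ in 𝓝 0, ∀ i j,
      torusDeriv i (a j) (toTorus t) = if j = i then 1 else 0 := by
    filter_upwards [eventually_eventually_nhds.2 hcoord] with t ht i j
    exact torusDeriv_eq_ite (ha j) (ht.mono fun s hs => hs j) i
  let coords : ℂ →L[ℝ] (Fin 2 → ℝ) := Complex.basisOneI.equivFunL
  have hδ' : ∀ᶠ ζ : ℂ in 𝓝 0, ∀ i j,
      torusDeriv i (a j) (toTorus (coords ζ)) = if j = i then 1 else 0 :=
    (coords.continuous.tendsto' 0 0 (map_zero _)).eventually hδ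
  obtain ⟨ε, hε, hball⟩ := Metric.eventually_nhds_iff_ball.1 hδ'
  let σ : ℂ →L[ℝ] (Fin 2 → ℝ) := ε • coords
  have hσ₁ : σ 1 = ε • Pi.single 0 1 := by
    ext i; fin_cases i <;> simp [σ, coords]
  have hσI : σ Complex.I = ε • Pi.single 1 1 := by
    ext i; fin_cases i <;> simp [σ, coords]
  have hσ (ζ : ℂ) (hζ : ζ ∈ ball 0 1) (i j : Fin 2) :
      torusDeriv i (a j) (toTorus (σ ζ)) = if j = i then 1 else 0 := by
    have hmem : ε • ζ ∈ ball 0 ε := by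
      rw [mem_ball_zero_iff] at hζ ⊢
      rw [norm_smul, Real.norm_of_nonneg hε.le]
      exact mul_lt_of_lt_one_right hε hζ
    have hmap : σ ζ = coords (ε • ζ) := (map_smul coords ε ζ).symm
    rw [hmap, hball _ hmem]
  have hsolve := eventually_exists_isTorusSmooth hQ ha
    (fun j => by simpa using hcoord.self_of_nhds j) (by simpa using hδ.self_of_nhds) hp hr
  have hscale : Tendsto (fun v : H => ε⁻¹ • v) (𝓝 0) (𝓝 0) :=
    (continuous_const_smul ε⁻¹).tendsto' 0 0 (smul_zero _)
  filter_upwards [hscale.eventually hsolve] with v ⟨y, hy, hyball, hCR, hy₀, hv⟩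
  refine ⟨fun ζ => y (toTorus (σ ζ)), hy.contDiff_comp_toTorus.comp σ.contDiff,
    fun ζ => hyball _, fun ζ hζ => ?_, by simpa using hy₀, ?_⟩
  · rw [hy.fderiv_comp_toTorus_comp σ hσ₁, hy.fderiv_comp_toTorus_comp σ hσI, hCR _ (hσ ζ hζ),
      smul_add, map_smul, smul_comm]
  · rw [hy.fderiv_comp_toTorus_comp σ hσ₁, map_zero, toTorus_zero, hv, smul_inv_smul₀ hε.ne']

end LocalSolvability

section Reduction

universe u

lemma exists_addEquiv_innerProductCore {V : Type u} [NormedAddCommGroup V]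
    [InnerProductSpace ℝ V] {j : V →L[ℝ] V} (hj : j.comp j = -ContinuousLinearMap.id ℝ V) :
    ∃ (H : Type u) (_ : AddCommGroup H) (_ : Module ℂ H) (c : InnerProductSpace.Core ℂ H)
      (e : V ≃+ H), (∀ (z : ℂ) x, e (z.re • x + z.im • j x) = z • e x) ∧
        ∀ x, (c.inner (e x) (e x)).re = ‖x‖ ^ 2 + ‖j x‖ ^ 2 := by
  have hjj (x : V) : j (j x) = -x := DFunLike.congr_fun hj x
  let ψ : ℂ →ₐ[ℝ] Module.End ℝ V := Complex.lift ⟨j, LinearMap.ext hjj⟩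
  let _ : Module ℂ V := Module.compHom V ψ.toRingHom
  have hsmul (z : ℂ) (x : V) : z • x = z.re • x + z.im • j x := by
    change ψ z x = _
    simp [ψ, Complex.liftAux_apply]
  let g (x y : V) : ℝ := inner ℝ x y + inner ℝ (j x) (j y)
  have hg (x : V) : g x x = ‖x‖ ^ 2 + ‖j x‖ ^ 2 := by
    simp only [g, real_inner_self_eq_norm_sq]
  refine ⟨V, _, _, {
    inner x y := ⟨g x y, g (j x) y⟩
    conj_inner_symm x y := by apply Complex.ext <;> simp [g, hjj, real_inner_comm]
    re_inner_nonneg x := add_nonneg real_inner_self_nonneg real_inner_self_nonneg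
    add_left x y z := by apply Complex.ext <;> simp [g, inner_add_left] <;> ring
    smul_left x y z := by
      apply Complex.ext <;> simp [g, hsmul, hjj, inner_add_left, inner_smul_left] <;> ring
    definite x hx := by
      have hnorm : ‖x‖ ^ 2 + ‖j x‖ ^ 2 = 0 := (hg x).symm.trans (congrArg Complex.re hx)
      exact norm_eq_zero.1 <| sq_eq_zero_iff.1 <|
        le_antisymm (hnorm ▸ le_add_of_nonneg_right (sq_nonneg _)) (sq_nonneg _) },
    AddEquiv.refl V, fun z x => (hsmul z x).symm, hg⟩

lemma exists_linearEquiv_conj {V : Type u} [NormedAddCommGroup V] [InnerProductSpace ℝ V]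
    {j : V →L[ℝ] V} (hj : j.comp j = -ContinuousLinearMap.id ℝ V) :
    ∃ (H : Type u) (_ : NormedAddCommGroup H) (_ : InnerProductSpace ℂ H) (e : V ≃ₗ[ℝ] H),
      (∀ x, e (j x) = Complex.I • e x) ∧ ∀ x, ‖e x‖ ^ 2 = ‖x‖ ^ 2 + ‖j x‖ ^ 2 := by
  obtain ⟨H, _, _, c, e, hsmul, hinner⟩ := exists_addEquiv_innerProductCore hj
  let _ : NormedAddCommGroup H := c.toNormedAddCommGroup
  let _ : InnerProductSpace ℂ H := InnerProductSpace.ofCore c.toCore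
  refine ⟨H, _, _, { e with map_smul' := fun t x => ?_ }, fun x => ?_, fun x => ?_⟩
  · simpa using hsmul t x
  · simpa using hsmul Complex.I x
  · exact (InnerProductSpace.norm_sq_eq_re_inner (𝕜 := ℂ) (e x)).trans (hinner x)

lemma exists_continuousLinearEquiv_conj {V : Type u} [NormedAddCommGroup V]
    [InnerProductSpace ℝ V] [CompleteSpace V] {j : V →L[ℝ] V}
    (hj : j.comp j = -ContinuousLinearMap.id ℝ V) :
    ∃ (H : Type u) (_ : NormedAddCommGroup H) (_ : InnerProductSpace ℂ H) (_ : CompleteSpace H)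
      (L : V ≃L[ℝ] H), ∀ x, L (j x) = Complex.I • L x := by
  obtain ⟨H, _, _, e, he, hnorm⟩ := exists_linearEquiv_conj hj
  have hle (x : V) : ‖e x‖ ≤ (1 + ‖j‖) * ‖x‖ := by
    have hsum : ‖e x‖ ≤ ‖x‖ + ‖j x‖ := by
      refine abs_le_of_sq_le_sq' ?_ (by positivity) |>.2
      nlinarith [hnorm x, mul_nonneg (norm_nonneg x) (norm_nonneg (j x))]
    linarith [j.le_opNorm x]
  have hge (x : V) : ‖x‖ ≤ ‖e x‖ :=
    le_of_sq_le_sq (by rw [hnorm]; exact le_add_of_nonneg_right (sq_nonneg _)) (norm_nonneg _)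
  let L : V ≃L[ℝ] H := e.toContinuousLinearEquivOfBounds (1 + ‖j‖) 1 hle fun y => by
    simpa using hge (e.symm y)
  exact ⟨H, _, _, (completeSpace_congr (e := L.toEquiv) L.isUniformEmbedding).1 ‹_›, L, he⟩

lemma comp_Jst_eq {V : Type*} [NormedAddCommGroup V] [NormedSpace ℝ V] {A : ℂ →L[ℝ] V}
    {j : V →L[ℝ] V} (hj : j.comp j = -ContinuousLinearMap.id ℝ V)
    (h : A Complex.I = j (A 1)) : A.comp (Jst ℂ) = j.comp A := by
  have hjj (x : V) : j (j x) = -x := DFunLike.congr_fun hj x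
  refine ContinuousLinearMap.coe_injective (Complex.basisOneI.ext fun i => ?_)
  fin_cases i
  · simp [Jst, h]
  · simp [Jst, h, hjj]

/-- The deviation of the almost complex structure `J` from multiplication by `i`, read in the linear
coordinate `L`. -/
def conjDefect {V H : Type*} [NormedAddCommGroup V] [NormedSpace ℝ V] [NormedAddCommGroup H]
    [NormedSpace ℂ H] (J : V → V →L[ℝ] V) (L : V ≃L[ℝ] H) (y : H) : H →L[ℝ] H :=
  (L : V →L[ℝ] H).comp ((J (L.symm y)).comp (L.symm : H →L[ℝ] V)) - Jst H

theorem statement17_general {V : Type*} [NormedAddCommGroup V] [InnerProductSpace ℂ V]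
    [CompleteSpace V] (Ω : Set V) (hΩ : IsOpen Ω) (J : V → V →L[ℝ] V) (hJ : IsACS Ω J)
    (p : V) (hp : p ∈ Ω) :
    ∃ 𝒱 ∈ 𝓝 (0 : V), ∀ v ∈ 𝒱, ∃ f : ℂ → V,
      ContDiffOn ℝ (⊤ : ℕ∞) f (ball (0 : ℂ) 1) ∧ MapsTo f (ball (0 : ℂ) 1) Ω ∧
      (∀ ζ ∈ ball (0 : ℂ) 1, (fderiv ℝ f ζ).comp (Jst ℂ) = (J (f ζ)).comp (fderiv ℝ f ζ)) ∧
      f 0 = p ∧ fderiv ℝ f 0 1 = v := by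
  let _ : InnerProductSpace ℝ V := .complexToReal
  obtain ⟨H, _, _, _, L, hL⟩ := exists_continuousLinearEquiv_conj (hJ.sq p hp)
  let _ : InnerProductSpace ℝ H := .complexToReal
  have hU : IsOpen (L.symm ⁻¹' Ω) := hΩ.preimage L.symm.continuous
  have hsmooth : ContDiffOn ℝ (⊤ : ℕ∞) (conjDefect J L) (L.symm ⁻¹' Ω) :=
    (contDiffOn_const.clm_comp ((hJ.smooth.comp L.symm.contDiff.contDiffOn
      (mapsTo_preimage _ _)).clm_comp contDiffOn_const)).sub contDiffOn_const
  obtain ⟨Q, hQ, r, hr, hrU, hQg⟩ := exists_contDiff_eqOn_ball hU hsmooth (x := L p) (by simpa)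
  have hQp : Q (L p) = 0 := by
    rw [hQg (mem_ball_self hr)]
    ext x
    simpa [conjDefect, Jst, sub_eq_zero] using hL (L.symm x)
  have hlim : Tendsto L (𝓝 0) (𝓝 0) := L.continuous.tendsto' 0 0 (map_zero L)
  refine ⟨_, hlim.eventually (eventually_exists_cauchyRiemann hQ hQp hr), fun v hv => ?_⟩
  obtain ⟨F, hF, hball, hCR, hF₀, hv⟩ := hv
  have hfderiv (ζ : ℂ) : fderiv ℝ (fun ζ => L.symm (F ζ)) ζ
      = (L.symm : H →L[ℝ] V).comp (fderiv ℝ F ζ) := L.symm.comp_fderiv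
  refine ⟨fun ζ => L.symm (F ζ), (L.symm.contDiff.comp hF).contDiffOn,
    fun ζ _ => hrU (hball ζ), fun ζ hζ => comp_Jst_eq (hJ.sq _ (hrU (hball ζ))) ?_, ?_, ?_⟩
  · rw [hfderiv]
    simp [hCR ζ hζ, hQg (hball ζ), conjDefect, Jst]
  · simp [hF₀]
  · simp [hfderiv, hv]

end Reduction

/-- **Existence of `J`-holomorphic discs in prescribed directions** (Nijenhuis–Woolf):
for every `p ∈ Ω` there is a neighborhood `𝒱` of `0` such that every `v ∈ 𝒱` is the
tangent vector at `0` of a smooth `J`-holomorphic disc centered at `p`. -/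
theorem statement17 {n : ℕ}
    (Ω : Set (EuclideanSpace ℂ (Fin n))) (hΩ : IsOpen Ω)
    (J : EuclideanSpace ℂ (Fin n) →
      EuclideanSpace ℂ (Fin n) →L[ℝ] EuclideanSpace ℂ (Fin n))
    (hJ : IsACS Ω J)
    (p : EuclideanSpace ℂ (Fin n)) (hp : p ∈ Ω) :
    ∃ V ∈ 𝓝 (0 : EuclideanSpace ℂ (Fin n)), ∀ v ∈ V,
      ∃ f : ℂ → EuclideanSpace ℂ (Fin n),
        ContDiffOn ℝ (⊤ : ℕ∞) f (ball (0 : ℂ) 1) ∧ MapsTo f (ball (0 : ℂ) 1) Ω ∧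
        (∀ ζ ∈ ball (0 : ℂ) 1,
          (fderiv ℝ f ζ).comp (Jst ℂ) = (J (f ζ)).comp (fderiv ℝ f ζ)) ∧
        f 0 = p ∧ fderiv ℝ f 0 1 = v :=
  statement17_general Ω hΩ J hJ p hp

end
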